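/- There is an absolute constant c > 0 such that for all ε, δ, p ∈ (0,1] the following holds. Let G be a graph of density at least p and let P₀ be an equipartition of V(G) of order at most 1/ε. Then there exists a graph G' on V(G) with |E(G) △ E(G')| ≤ δ|E(G)| such that G' has an ε-regular equipartition refining P₀ whose order is at most twr_{1/ε}(c·log(1/p)/δ²). -/

import Mathlib

/-!
Identify `G` with its adjacency indicator `F` on `V × V`, and let `M = ∑ F = 2|E(G)|`.

The engine is an entropy decrement. For a vertex partition `g`, the entropy `-∑ a log a`, with `a`
the average of `F` over the cells of `g × g`, lies between `0` and `M log (1 / p)`. Repeatedly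
refine a partition `f` to a partition `g` by weak (Frieze–Kannan) regularity, with an accuracy
depending on the size of `f`. Within `O(log (1 / p) / δ²)` steps there is one at which the entropy
drops by at most `δ² M / 16`. By a Pinsker-type inequality the averages over `f` and `g` then
differ by at most `δ M / 2` in `L¹`. Rescaling `F` (or `1 - F`, to stay within `[0,1]`) on every
cell of `g` so that its mean becomes the average over the cell of `f` gives a `[0,1]`-valued weight
`W` at `L¹` distance at most `δ M / 2` from `F` which is very close in cut norm to a function that
is constant on the cells of `f`.

Rounding `W` at random gives a graph `G'` with the same properties, up to errors negligible for
large `|V|`. Splitting every part of `P₀` into many equal pieces, most of which lie inside a class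
of `f`, gives an equipartition for which closeness in cut norm is `ε`-regularity. Every step costs
two exponentials, whence the height of the tower.

If `|V|` is below the tower, the partition into singletons works instead. If `1 ≤ p (1 + δ)`, then
`G` can be completed by adding at most `δ |E(G)|` edges, and the complete graph is used. Otherwise
`log (1 / p) / δ²` is at least `1 / (2 δ)`, so that the tower dominates `1 / δ` and `1 / p`.
-/

open Finset
open scoped Classical

/-- `eCnt G A B` is the number of ordered pairs `(u,v) ∈ A × B` with `uv` an edge of `G`. -/
noncomputable def eCnt {V : Type*} [Fintype V] (G : SimpleGraph V) (A B : Finset V) : ℕ :=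
  ((A ×ˢ B).filter fun p => G.Adj p.1 p.2).card

/-- The edge density `d_G(A,B)` between vertex subsets `A` and `B`. -/
noncomputable def dens {V : Type*} [Fintype V] (G : SimpleGraph V) (A B : Finset V) : ℝ :=
  eCnt G A B / (A.card * B.card)

/-- The pair `(A,B)` is `ε`-regular. -/
def RegPair {V : Type*} [Fintype V] (G : SimpleGraph V) (ε : ℝ) (A B : Finset V) : Prop :=
  ∀ A' ⊆ A, ∀ B' ⊆ B, ε * A.card ≤ A'.card → ε * B.card ≤ B'.card →
    |dens G A B - dens G A' B'| ≤ ε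

/-- The density `d_G = 2|E|/|V|²` of a graph. -/
noncomputable def graphDensity {V : Type*} [Fintype V] (G : SimpleGraph V) : ℝ :=
  2 * G.edgeSet.ncard / (Fintype.card V : ℝ) ^ 2

/-- The number of ordered pairs of parts of `P` that are not `ε`-regular. -/
noncomputable def irregCount {V : Type*} [Fintype V] [DecidableEq V] (G : SimpleGraph V)
    (ε : ℝ) (P : Finpartition (univ : Finset V)) : ℕ :=
  ((P.parts ×ˢ P.parts).filter fun pq => ¬ RegPair G ε pq.1 pq.2).card

/-- A partition of the vertex set is an `ε`-regular partition if all but at most `ε k²`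
of the ordered pairs of its parts are `ε`-regular. -/
def IsRegularPartition {V : Type*} [Fintype V] [DecidableEq V] (G : SimpleGraph V)
    (ε : ℝ) (P : Finpartition (univ : Finset V)) : Prop :=
  (irregCount G ε P : ℝ) ≤ ε * (P.parts.card : ℝ) ^ 2

/-- `twrAt y x` is a tower of `x` exponents with `y` at the top. -/
noncomputable def twrAt (y : ℝ) : ℕ → ℝ
  | 0 => y
  | n + 1 => (2 : ℝ) ^ twrAt y n

open scoped BigOperators

/-! ### Averages over the cells of a partition -/

section Averages

variable {Ω κ ι : Type*} [Fintype Ω] {g : Ω → κ} {f : Ω → ι} {F : Ω → ℝ}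

/-- The conditional expectation of `F` on the partition of `Ω` into the fibres of `g`. Partitions
are encoded by labelling functions throughout, and "`g` refines `f`" is `f.FactorsThrough g`. -/
noncomputable def cellAvg (g : Ω → κ) (F : Ω → ℝ) (ω : Ω) : ℝ :=
  𝔼 ω' with g ω' = g ω, F ω'

lemma filter_label_eq_nonempty (g : Ω → κ) (ω : Ω) : ({ω' | g ω' = g ω} : Finset Ω).Nonempty :=
  ⟨ω, by simp⟩

lemma cellAvg_factorsThrough (g : Ω → κ) (F : Ω → ℝ) : (cellAvg g F).FactorsThrough g :=
  fun _ _ h => by simp only [cellAvg, h]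

lemma cellAvg_nonneg (hF : ∀ ω, 0 ≤ F ω) (ω : Ω) : 0 ≤ cellAvg g F ω :=
  expect_nonneg fun _ _ => hF _

lemma cellAvg_le_one (hF : ∀ ω, F ω ≤ 1) (ω : Ω) : cellAvg g F ω ≤ 1 :=
  expect_le (filter_label_eq_nonempty g ω) fun _ _ => hF _

lemma cellAvg_mul_left {c : Ω → ℝ} (hc : c.FactorsThrough g) (ω : Ω) :
    cellAvg g (fun ω => c ω * F ω) ω = c ω * cellAvg g F ω := by
  simp only [cellAvg, mul_expect]
  exact expect_congr rfl fun ω' h => by rw [hc (mem_filter.1 h).2]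

lemma sum_cellAvg (g : Ω → κ) (F : Ω → ℝ) : ∑ ω, cellAvg g F ω = ∑ ω, F ω := by
  rw [← sum_fiberwise_of_maps_to fun ω _ => mem_image_of_mem g (mem_univ ω),
    ← sum_fiberwise_of_maps_to fun ω _ => mem_image_of_mem g (mem_univ ω)]
  refine sum_congr rfl fun k _ => ?_
  calc ∑ ω with g ω = k, cellAvg g F ω = ∑ ω with g ω = k, 𝔼 ω' with g ω' = k, F ω' :=
        sum_congr rfl fun ω h => by rw [cellAvg, (mem_filter.1 h).2]
    _ = ∑ ω with g ω = k, F ω := by rw [sum_const, card_smul_expect]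

lemma sum_mul_cellAvg {c : Ω → ℝ} (hc : c.FactorsThrough g) :
    ∑ ω, c ω * cellAvg g F ω = ∑ ω, c ω * F ω := by
  simp only [← cellAvg_mul_left hc, sum_cellAvg]

lemma sum_mul_cellAvg_eq_sum_mul_cellAvg (hfg : f.FactorsThrough g) {c : Ω → ℝ}
    (hc : c.FactorsThrough f) : ∑ ω, c ω * cellAvg g F ω = ∑ ω, c ω * cellAvg f F ω := by
  rw [sum_mul_cellAvg hc, sum_mul_cellAvg fun _ _ h => hc (hfg h)]

lemma cellAvg_eq_zero_of_refines (hfg : f.FactorsThrough g) (hF : ∀ ω, 0 ≤ F ω) {ω : Ω}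
    (h : cellAvg f F ω = 0) : cellAvg g F ω = 0 := by
  rw [cellAvg, expect_eq_zero_iff_of_nonneg fun _ _ => hF _] at h
  exact expect_eq_zero fun ω' h' => h ω' (by simpa using hfg (mem_filter.1 h').2)

end Averages

/-! ### Energy and entropy of the cell averages -/

section Energy

variable {Ω κ ι : Type*} [Fintype Ω] {g : Ω → κ} {f : Ω → ι} {F : Ω → ℝ}

/-- The energy `∑ a²` of the cell averages `a` of `F`. It increases when the partition is
refined. -/
noncomputable def cellEnergy (g : Ω → κ) (F : Ω → ℝ) : ℝ :=
  ∑ ω, cellAvg g F ω ^ 2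

lemma cellEnergy_nonneg (g : Ω → κ) (F : Ω → ℝ) : 0 ≤ cellEnergy g F :=
  sum_nonneg fun _ _ => sq_nonneg _

lemma cellEnergy_le_card (h0 : ∀ ω, 0 ≤ F ω) (h1 : ∀ ω, F ω ≤ 1) :
    cellEnergy g F ≤ Fintype.card Ω := by
  simpa [cellEnergy] using
    sum_le_card_nsmul univ (fun ω => cellAvg g F ω ^ 2) 1 fun ω _ =>
      pow_le_one₀ (cellAvg_nonneg h0 ω) (cellAvg_le_one h1 ω)

lemma sum_sq_cellAvg_sub_cellAvg (hfg : f.FactorsThrough g) :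
    ∑ ω, (cellAvg g F ω - cellAvg f F ω) ^ 2 = cellEnergy g F - cellEnergy f F := by
  have orthogonal := sum_mul_cellAvg_eq_sum_mul_cellAvg (F := F) hfg (cellAvg_factorsThrough f F)
  have expand : ∀ ω, (cellAvg g F ω - cellAvg f F ω) ^ 2 = cellAvg g F ω ^ 2 - cellAvg f F ω ^ 2
      - 2 * (cellAvg f F ω * cellAvg g F ω - cellAvg f F ω * cellAvg f F ω) := fun ω => by ring
  simp only [cellEnergy, expand, sum_sub_distrib, ← mul_sum, orthogonal]
  ring

lemma sq_sum_mul_sub_cellAvg_le (hfg : f.FactorsThrough g) {c : Ω → ℝ}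
    (hc : c.FactorsThrough g) (hc1 : ∀ ω, |c ω| ≤ 1) :
    (∑ ω, c ω * (F ω - cellAvg f F ω)) ^ 2 ≤
      Fintype.card Ω * (cellEnergy g F - cellEnergy f F) := by
  have replace_by_avg : ∑ ω, c ω * (F ω - cellAvg f F ω) =
      ∑ ω, c ω * (cellAvg g F ω - cellAvg f F ω) := by
    simp only [mul_sub, sum_sub_distrib, sum_mul_cellAvg hc]
  have sum_sq_le : ∑ ω, c ω ^ 2 ≤ Fintype.card Ω := by
    simpa using sum_le_card_nsmul univ (fun ω => c ω ^ 2) 1 fun ω _ =>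
      (sq_le_one_iff_abs_le_one _).2 (hc1 ω)
  rw [replace_by_avg, ← sum_sq_cellAvg_sub_cellAvg hfg]
  calc (∑ ω, c ω * (cellAvg g F ω - cellAvg f F ω)) ^ 2
      ≤ (∑ ω, c ω ^ 2) * ∑ ω, (cellAvg g F ω - cellAvg f F ω) ^ 2 :=
        sum_mul_sq_le_sq_mul_sq _ _ _
    _ ≤ Fintype.card Ω * ∑ ω, (cellAvg g F ω - cellAvg f F ω) ^ 2 := by gcongr

end Energy

section Entropy

variable {Ω κ ι : Type*} [Fintype Ω] {g : Ω → κ} {f : Ω → ι} {F : Ω → ℝ}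

/-- The entropy-like potential `-∑ a log a` of the cell averages `a` of `F`. It decreases when the
partition is refined. -/
noncomputable def cellEntropy (g : Ω → κ) (F : Ω → ℝ) : ℝ :=
  ∑ ω, Real.negMulLog (cellAvg g F ω)

lemma cellEntropy_nonneg (h0 : ∀ ω, 0 ≤ F ω) (h1 : ∀ ω, F ω ≤ 1) : 0 ≤ cellEntropy g F :=
  sum_nonneg fun ω _ => Real.negMulLog_nonneg (cellAvg_nonneg h0 ω) (cellAvg_le_one h1 ω)

lemma cellEntropy_le_of_subsingleton [Subsingleton κ] {p : ℝ} (hp : 0 < p)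
    (hF : p * Fintype.card Ω ≤ ∑ ω, F ω) :
    cellEntropy g F ≤ (∑ ω, F ω) * Real.log (1 / p) := by
  rcases isEmpty_or_nonempty Ω with hΩ | hΩ
  · simp [cellEntropy]
  have card_pos : (0 : ℝ) < Fintype.card Ω := by exact_mod_cast Fintype.card_pos
  have sum_pos : 0 < ∑ ω, F ω := (mul_pos hp card_pos).trans_le hF
  have avg_eq : ∀ ω, cellAvg g F ω = (∑ ω, F ω) / Fintype.card Ω := fun ω => by
    simp [cellAvg, expect_eq_sum_div_card, Subsingleton.elim (g _) (g ω)]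
  have le_avg : p ≤ (∑ ω, F ω) / Fintype.card Ω := (le_div_iff₀ card_pos).2 hF
  calc cellEntropy g F
      = (∑ ω, F ω) * -Real.log ((∑ ω, F ω) / Fintype.card Ω) := by
        simp only [cellEntropy, avg_eq, Real.negMulLog, sum_const, card_univ, nsmul_eq_mul]
        field_simp
    _ ≤ (∑ ω, F ω) * Real.log (1 / p) := by
        rw [one_div, Real.log_inv]
        gcongr

/-- The summands of the relative entropy dominate those of the squared Hellinger distance;
`hab` is absolute continuity. -/
lemma sq_sqrt_sub_sqrt_le {a b : ℝ} (ha : 0 ≤ a) (hb : 0 ≤ b) (hab : b = 0 → a = 0) :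
    (√a - √b) ^ 2 ≤ a * Real.log a - a * Real.log b - a + b := by
  rcases hb.eq_or_lt with rfl | hb
  · simp [hab rfl]
  rcases ha.eq_or_lt with rfl | ha
  · simp [hb.le]
  have log_le := Real.log_le_sub_one_of_pos (div_pos (Real.sqrt_pos.2 hb) (Real.sqrt_pos.2 ha))
  rw [Real.log_div (by positivity) (by positivity), Real.log_sqrt hb.le,
    Real.log_sqrt ha.le] at log_le
  have mul_log_le : a * (Real.log b / 2 - Real.log a / 2) ≤ √a * √b - a := by
    calc a * (Real.log b / 2 - Real.log a / 2) ≤ √a ^ 2 * (√b / √a - 1) := by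
          rw [Real.sq_sqrt ha.le]; gcongr
      _ = √a * √b - √a ^ 2 := by field_simp
      _ = √a * √b - a := by rw [Real.sq_sqrt ha.le]
  linear_combination 2 * mul_log_le + Real.sq_sqrt ha.le + Real.sq_sqrt hb.le

lemma sum_sq_sqrt_cellAvg_sub_le (hfg : f.FactorsThrough g) (hF : ∀ ω, 0 ≤ F ω) :
    ∑ ω, (√(cellAvg g F ω) - √(cellAvg f F ω)) ^ 2 ≤ cellEntropy f F - cellEntropy g F := by
  set a := cellAvg g F with ha
  set b := cellAvg f F with hb
  have cross : ∑ ω, Real.log (b ω) * a ω = ∑ ω, Real.log (b ω) * b ω :=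
    sum_mul_cellAvg_eq_sum_mul_cellAvg hfg fun _ _ h => by rw [hb, cellAvg_factorsThrough f F h]
  have mass : ∑ ω, a ω = ∑ ω, b ω := (sum_cellAvg g F).trans (sum_cellAvg f F).symm
  calc ∑ ω, (√(a ω) - √(b ω)) ^ 2
      ≤ ∑ ω, (a ω * Real.log (a ω) - Real.log (b ω) * a ω - a ω + b ω) := by
        refine sum_le_sum fun ω _ => ?_
        rw [mul_comm (Real.log (b ω))]
        exact sq_sqrt_sub_sqrt_le (cellAvg_nonneg hF ω) (cellAvg_nonneg hF ω)
          (cellAvg_eq_zero_of_refines hfg hF)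
    _ = cellEntropy f F - cellEntropy g F := by
        simp only [sum_add_distrib, sum_sub_distrib, cross, mass, cellEntropy, Real.negMulLog,
          ← ha, ← hb, neg_mul, sum_neg_distrib]
        simp only [mul_comm (Real.log _)]
        ring

lemma sq_sum_abs_sub_le {a b : Ω → ℝ} (ha : ∀ ω, 0 ≤ a ω) (hb : ∀ ω, 0 ≤ b ω) :
    (∑ ω, |a ω - b ω|) ^ 2 ≤
      2 * (∑ ω, a ω + ∑ ω, b ω) * ∑ ω, (√(a ω) - √(b ω)) ^ 2 := by
  have factor : ∀ ω, |a ω - b ω| = (√(a ω) + √(b ω)) * |√(a ω) - √(b ω)| := fun ω => by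
    rw [← abs_of_nonneg (by positivity : 0 ≤ √(a ω) + √(b ω)), ← abs_mul, ← sq_sub_sq,
      Real.sq_sqrt (ha ω), Real.sq_sqrt (hb ω)]
  have sq_add_le : ∀ ω, (√(a ω) + √(b ω)) ^ 2 ≤ 2 * (a ω + b ω) := fun ω => by
    linear_combination add_sq_le (a := √(a ω)) (b := √(b ω))
      + 2 * Real.sq_sqrt (ha ω) + 2 * Real.sq_sqrt (hb ω)
  calc (∑ ω, |a ω - b ω|) ^ 2
      ≤ (∑ ω, (√(a ω) + √(b ω)) ^ 2) * ∑ ω, |√(a ω) - √(b ω)| ^ 2 := by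
        simp only [factor]
        exact sum_mul_sq_le_sq_mul_sq _ _ _
    _ ≤ (∑ ω, 2 * (a ω + b ω)) * ∑ ω, (√(a ω) - √(b ω)) ^ 2 := by
        simp only [sq_abs]
        gcongr with ω
        exact sq_add_le ω
    _ = 2 * (∑ ω, a ω + ∑ ω, b ω) * ∑ ω, (√(a ω) - √(b ω)) ^ 2 := by
        rw [← mul_sum, sum_add_distrib]

/-- A Pinsker-type inequality. The factor `∑ F`, rather than the size of `Ω`, is what makes the
argument efficient for sparse graphs. -/
lemma sq_sum_abs_cellAvg_sub_le (hfg : f.FactorsThrough g) (hF : ∀ ω, 0 ≤ F ω) :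
    (∑ ω, |cellAvg g F ω - cellAvg f F ω|) ^ 2 ≤
      4 * (∑ ω, F ω) * (cellEntropy f F - cellEntropy g F) := by
  have sum_F_nonneg : 0 ≤ ∑ ω, F ω := sum_nonneg fun ω _ => hF ω
  calc (∑ ω, |cellAvg g F ω - cellAvg f F ω|) ^ 2
      ≤ 2 * (∑ ω, cellAvg g F ω + ∑ ω, cellAvg f F ω) *
          ∑ ω, (√(cellAvg g F ω) - √(cellAvg f F ω)) ^ 2 :=
        sq_sum_abs_sub_le (cellAvg_nonneg hF) (cellAvg_nonneg hF)
    _ = 4 * (∑ ω, F ω) * ∑ ω, (√(cellAvg g F ω) - √(cellAvg f F ω)) ^ 2 := by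
        simp only [sum_cellAvg]; ring
    _ ≤ 4 * (∑ ω, F ω) * (cellEntropy f F - cellEntropy g F) := by
        gcongr
        exact sum_sq_sqrt_cellAvg_sub_le hfg hF

end Entropy

/-! ### Tilting -/

/-- The slope of the affine map `x ↦ t + tiltCoeff t a * (x - a)` from `[0, 1]` to itself which
sends `a` to `t` and fixes `0` (when `t ≤ a`) or `1` (when `a < t`). If `a = t = 0` the value is
the junk `0 / 0 = 0`. -/
noncomputable def tiltCoeff (t a : ℝ) : ℝ :=
  if t ≤ a then t / a else (1 - t) / (1 - a)

section TiltCoeff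

variable {t a x : ℝ}

lemma tiltCoeff_nonneg (ht : 0 ≤ t) (ht1 : t ≤ 1) : 0 ≤ tiltCoeff t a := by
  unfold tiltCoeff
  split_ifs with h
  · exact div_nonneg ht (ht.trans h)
  · exact div_nonneg (by linarith) (by linarith)

lemma tiltCoeff_le_one (ht : 0 ≤ t) (ht1 : t ≤ 1) : tiltCoeff t a ≤ 1 := by
  unfold tiltCoeff
  split_ifs with h
  · exact div_le_one_of_le₀ h (ht.trans h)
  · exact div_le_one_of_le₀ (by linarith) (by linarith)

lemma add_tiltCoeff_mul_of_le (ht : 0 ≤ t) (h : t ≤ a) :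
    t + tiltCoeff t a * (x - a) = tiltCoeff t a * x := by
  rw [tiltCoeff, if_pos h, mul_sub, div_mul_cancel_of_imp fun ha => by linarith]
  ring

lemma add_tiltCoeff_mul_of_lt (ht1 : t ≤ 1) (h : a < t) :
    t + tiltCoeff t a * (x - a) = 1 - tiltCoeff t a * (1 - x) := by
  have : 1 - a ≠ 0 := by linarith
  rw [tiltCoeff, if_neg h.not_ge]
  field_simp
  ring

lemma add_tiltCoeff_mul_mem_Icc (ht : t ∈ Set.Icc (0 : ℝ) 1) (hx : x ∈ Set.Icc (0 : ℝ) 1) :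
    t + tiltCoeff t a * (x - a) ∈ Set.Icc (0 : ℝ) 1 := by
  have coeff : tiltCoeff t a ∈ Set.Icc (0 : ℝ) 1 :=
    ⟨tiltCoeff_nonneg ht.1 ht.2, tiltCoeff_le_one ht.1 ht.2⟩
  rcases le_or_gt t a with h | h
  · rw [add_tiltCoeff_mul_of_le ht.1 h]
    exact unitInterval.mul_mem coeff hx
  · rw [add_tiltCoeff_mul_of_lt ht.2 h]
    exact Set.Icc.one_sub_mem (unitInterval.mul_mem coeff (Set.Icc.one_sub_mem hx))

end TiltCoeff

section Tilt

variable {Ω κ ι : Type*} [Fintype Ω] {g : Ω → κ} {f : Ω → ι} {F : Ω → ℝ}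

/-- The modification of `F` that, on each cell of the finer partition `g`, has mean equal to the
average of `F` over the surrounding cell of `f`, obtained by scaling `F` or `1 - F` down. -/
noncomputable def tilt (g : Ω → κ) (f : Ω → ι) (F : Ω → ℝ) (ω : Ω) : ℝ :=
  cellAvg f F ω + tiltCoeff (cellAvg f F ω) (cellAvg g F ω) * (F ω - cellAvg g F ω)

lemma tilt_mem_Icc (h0 : ∀ ω, 0 ≤ F ω) (h1 : ∀ ω, F ω ≤ 1) (ω : Ω) :
    tilt g f F ω ∈ Set.Icc (0 : ℝ) 1 :=
  add_tiltCoeff_mul_mem_Icc ⟨cellAvg_nonneg h0 ω, cellAvg_le_one h1 ω⟩ ⟨h0 ω, h1 ω⟩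

lemma tiltCoeff_cellAvg_factorsThrough (hfg : f.FactorsThrough g) :
    (fun ω => tiltCoeff (cellAvg f F ω) (cellAvg g F ω)).FactorsThrough g := fun _ _ h => by
  simp only [cellAvg_factorsThrough g F h, cellAvg_factorsThrough f F (hfg h)]

lemma sum_mul_tilt (hfg : f.FactorsThrough g) {c : Ω → ℝ} (hc : c.FactorsThrough g) :
    ∑ ω, c ω * tilt g f F ω = ∑ ω, c ω * cellAvg f F ω := by
  have vanish := sum_mul_cellAvg (F := F)
    (c := fun ω => c ω * tiltCoeff (cellAvg f F ω) (cellAvg g F ω)) fun _ _ h =>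
      congrArg₂ (· * ·) (hc h) (tiltCoeff_cellAvg_factorsThrough hfg h)
  simp only [tilt, mul_add, mul_sub, sum_add_distrib, sum_sub_distrib, ← mul_assoc, vanish,
    sub_self, add_zero]

/-- Tilting moves `F` in a single direction on every cell of `g`, so its `L¹` cost is exactly the
`L¹` distance between the two averages. -/
lemma sum_abs_tilt_sub (hfg : f.FactorsThrough g) (h0 : ∀ ω, 0 ≤ F ω) (h1 : ∀ ω, F ω ≤ 1) :
    ∑ ω, |tilt g f F ω - F ω| = ∑ ω, |cellAvg g F ω - cellAvg f F ω| := by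
  set sgn : Ω → ℝ := fun ω => if cellAvg f F ω ≤ cellAvg g F ω then -1 else 1 with hsgn
  have sgn_factors : sgn.FactorsThrough g := fun _ _ h => by
    simp only [hsgn, cellAvg_factorsThrough g F h, cellAvg_factorsThrough f F (hfg h)]
  have abs_tilt : ∀ ω, |tilt g f F ω - F ω| = sgn ω * (tilt g f F ω - F ω) := fun ω => by
    have ht0 := cellAvg_nonneg (g := f) h0 ω
    have ht1 := cellAvg_le_one (g := f) h1 ω
    have coeff := tiltCoeff_le_one (a := cellAvg g F ω) ht0 ht1
    simp only [hsgn, tilt]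
    split_ifs with h
    · rw [add_tiltCoeff_mul_of_le ht0 h, neg_one_mul]
      exact abs_of_nonpos (sub_nonpos.2 (mul_le_of_le_one_left (h0 ω) coeff))
    · rw [add_tiltCoeff_mul_of_lt ht1 (not_le.1 h), one_mul]
      have := mul_le_of_le_one_left (sub_nonneg.2 (h1 ω)) coeff
      exact abs_of_nonneg (by linarith)
  have abs_avg : ∀ ω, |cellAvg g F ω - cellAvg f F ω| =
      sgn ω * (cellAvg f F ω - cellAvg g F ω) := fun ω => by
    simp only [hsgn]
    split_ifs with h
    · rw [abs_of_nonneg (sub_nonneg.2 h)]; ring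
    · rw [abs_of_neg (sub_neg.2 (not_le.1 h))]; ring
  simp only [abs_tilt, abs_avg, mul_sub, sum_sub_distrib, sum_mul_tilt hfg sgn_factors,
    sum_mul_cellAvg sgn_factors]

end Tilt

/-! ### Edge weights and the cut norm -/

section EdgeWeight

variable {V κ ι : Type*} [Fintype V]

/-- A `[0, 1]`-valued symmetric weight on the ordered pairs of vertices. -/
structure IsEdgeWeight (W : V × V → ℝ) : Prop where
  nonneg : ∀ ω, 0 ≤ W ω
  le_one : ∀ ω, W ω ≤ 1
  swap : ∀ ω, W ω.swap = W ω

lemma cellAvg_prodMap_swap (g : V → κ) {W : V × V → ℝ} (hW : ∀ ω, W ω.swap = W ω) (ω : V × V) :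
    cellAvg (Prod.map g g) W ω.swap = cellAvg (Prod.map g g) W ω :=
  expect_equiv (Equiv.prodComm V V)
    (by simp [Prod.ext_iff, and_comm]) fun ω' _ => (hW ω').symm

lemma isEdgeWeight_tilt (g : V → κ) (f : V → ι) {W : V × V → ℝ} (hW : IsEdgeWeight W) :
    IsEdgeWeight (tilt (Prod.map g g) (Prod.map f f) W) where
  nonneg ω := (tilt_mem_Icc hW.nonneg hW.le_one ω).1
  le_one ω := (tilt_mem_Icc hW.nonneg hW.le_one ω).2
  swap ω := by simp only [tilt, cellAvg_prodMap_swap _ hW.swap, hW.swap]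

end EdgeWeight

section CutNorm

variable {V : Type*}

/-- The cut norm of a function on pairs of vertices: the largest absolute sum over a rectangle. -/
noncomputable def cutNorm (H : V × V → ℝ) : ℝ :=
  ⨆ R : Finset V × Finset V, |∑ ω ∈ R.1 ×ˢ R.2, H ω|

lemma cutNorm_le {H : V × V → ℝ} {t : ℝ} (h : ∀ A B : Finset V, |∑ ω ∈ A ×ˢ B, H ω| ≤ t) :
    cutNorm H ≤ t :=
  ciSup_le fun R => h R.1 R.2

variable [Finite V]

lemma abs_sum_le_cutNorm (H : V × V → ℝ) (A B : Finset V) :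
    |∑ ω ∈ A ×ˢ B, H ω| ≤ cutNorm H :=
  le_ciSup (f := fun R : Finset V × Finset V => |∑ ω ∈ R.1 ×ˢ R.2, H ω|)
    (Set.finite_range _).bddAbove (A, B)

lemma cutNorm_add_le (H K : V × V → ℝ) : cutNorm (H + K) ≤ cutNorm H + cutNorm K :=
  cutNorm_le fun A B => by
    simp only [Pi.add_apply, sum_add_distrib]
    exact (abs_add_le _ _).trans (add_le_add (abs_sum_le_cutNorm H A B) (abs_sum_le_cutNorm K A B))

end CutNorm

/-! ### Weak regularity -/

section WeakRegularity

universe u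

variable {V κ : Type*} {ι : Type u} {g : V → κ} {f : V → ι}

lemma factorsThrough_prodMap (hfg : f.FactorsThrough g) :
    (Prod.map f f).FactorsThrough (Prod.map g g) := fun _ _ h =>
  Prod.ext (hfg (congrArg Prod.fst h)) (hfg (congrArg Prod.snd h))

/-- The labelling of the common refinement of `g` and the partitions into `S`, `Sᶜ` and `T`,
`Tᶜ`. -/
noncomputable def splitLabel (g : V → κ) (S T : Finset V) (x : V) : κ × Bool × Bool :=
  (g x, decide (x ∈ S), decide (x ∈ T))

lemma factorsThrough_splitLabel (g : V → κ) (S T : Finset V) :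
    g.FactorsThrough (splitLabel g S T) := fun _ _ h => congrArg Prod.fst h

lemma ite_mem_product_factorsThrough_splitLabel {S T : Finset V} {c : V × V → ℝ}
    (hc : c.FactorsThrough (Prod.map g g)) :
    (fun ω => if ω ∈ S ×ˢ T then c ω else 0).FactorsThrough
      (Prod.map (splitLabel g S T) (splitLabel g S T)) := fun ω ω' h => by
  have hcω := hc (factorsThrough_prodMap (factorsThrough_splitLabel g S T) h)
  simp only [splitLabel, Prod.map, Prod.mk.injEq, decide_eq_decide] at h
  simp only [mem_product, h.1.2.1, h.2.2.2, hcω]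

variable [Fintype V] {F : V × V → ℝ} {η : ℝ}

/-- On the rectangle `S ×ˢ T` the discrepancy is a multiple of `F - cellAvg g F` which is measurable
for the split partition, so Cauchy–Schwarz applies. -/
lemma sq_sum_tilt_sub_le_cellEnergy_sub (hfg : f.FactorsThrough g) (h0 : ∀ ω, 0 ≤ F ω)
    (h1 : ∀ ω, F ω ≤ 1) (S T : Finset V) :
    (∑ ω ∈ S ×ˢ T, (tilt (Prod.map g g) (Prod.map f f) F - cellAvg (Prod.map f f) F) ω) ^ 2 ≤
      Fintype.card (V × V) * (cellEnergy (Prod.map (splitLabel g S T) (splitLabel g S T)) F -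
        cellEnergy (Prod.map g g) F) := by
  set coeff : V × V → ℝ := fun ω =>
    tiltCoeff (cellAvg (Prod.map f f) F ω) (cellAvg (Prod.map g g) F ω)
  have coeff_factors : coeff.FactorsThrough (Prod.map g g) :=
    tiltCoeff_cellAvg_factorsThrough (factorsThrough_prodMap hfg)
  have coeff_mem : ∀ ω, coeff ω ∈ Set.Icc (0 : ℝ) 1 := fun ω =>
    have ht0 := cellAvg_nonneg (g := Prod.map f f) h0 ω
    have ht1 := cellAvg_le_one (g := Prod.map f f) h1 ω
    ⟨tiltCoeff_nonneg ht0 ht1, tiltCoeff_le_one ht0 ht1⟩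
  have bound := sq_sum_mul_sub_cellAvg_le (F := F)
    (factorsThrough_prodMap (factorsThrough_splitLabel g S T))
    (ite_mem_product_factorsThrough_splitLabel coeff_factors) fun ω => by
      split_ifs
      · exact abs_le.2 ⟨by linarith [(coeff_mem ω).1], (coeff_mem ω).2⟩
      · simp
  simpa only [ite_mul, zero_mul, sum_ite_mem, univ_inter, Pi.sub_apply, tilt,
    add_sub_cancel_left] using bound

lemma cellEnergy_splitLabel_gt (hfg : f.FactorsThrough g) (h0 : ∀ ω, 0 ≤ F ω)
    (h1 : ∀ ω, F ω ≤ 1) (hη : 0 < η) {S T : Finset V}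
    (hST : η * Fintype.card (V × V) <
      |∑ ω ∈ S ×ˢ T, (tilt (Prod.map g g) (Prod.map f f) F - cellAvg (Prod.map f f) F) ω|) :
    cellEnergy (Prod.map g g) F + η ^ 2 * Fintype.card (V × V) <
      cellEnergy (Prod.map (splitLabel g S T) (splitLabel g S T)) F := by
  have card_nonneg : (0 : ℝ) ≤ Fintype.card (V × V) := Nat.cast_nonneg _
  have sq_lt := (pow_lt_pow_left₀ hST (by positivity) two_ne_zero).trans_le
    ((sq_abs _).trans_le (sq_sum_tilt_sub_le_cellEnergy_sub hfg h0 h1 S T))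
  rw [mul_pow, sq (Fintype.card (V × V) : ℝ), mul_left_comm] at sq_lt
  linarith [lt_of_mul_lt_mul_left sq_lt card_nonneg]

lemma exists_cellEnergy_splitLabel_gt (hfg : f.FactorsThrough g) (h0 : ∀ ω, 0 ≤ F ω)
    (h1 : ∀ ω, F ω ≤ 1) (hη : 0 < η)
    (hcut : η * Fintype.card (V × V) <
      cutNorm (tilt (Prod.map g g) (Prod.map f f) F - cellAvg (Prod.map f f) F)) :
    ∃ S T : Finset V, cellEnergy (Prod.map g g) F + η ^ 2 * Fintype.card (V × V) <
      cellEnergy (Prod.map (splitLabel g S T) (splitLabel g S T)) F := by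
  contrapose! hcut
  exact cutNorm_le fun S T => not_lt.1 fun h =>
    (cellEnergy_splitLabel_gt hfg h0 h1 hη h).not_ge (hcut S T)

/-- Frieze–Kannan weak regularity: splitting along a rectangle that violates the cut norm bound
raises the energy, which is at most `|V × V|`, by more than `η² |V × V|`. -/
theorem exists_cutNorm_tilt_sub_le [Fintype ι] (f : V → ι) (h0 : ∀ ω, 0 ≤ F ω)
    (h1 : ∀ ω, F ω ≤ 1) (hη : 0 < η) :
    ∃ (κ : Type u) (_ : Fintype κ) (g : V → κ), f.FactorsThrough g ∧
      Fintype.card κ ≤ Fintype.card ι * 4 ^ ⌈1 / η ^ 2⌉₊ ∧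
      cutNorm (tilt (Prod.map g g) (Prod.map f f) F - cellAvg (Prod.map f f) F) ≤
        η * Fintype.card (V × V) := by
  by_contra! no_good
  set N := ⌈1 / η ^ 2⌉₊
  have chain : ∀ i ≤ N, ∃ (κ : Type u) (_ : Fintype κ) (g : V → κ), f.FactorsThrough g ∧
      Fintype.card κ ≤ Fintype.card ι * 4 ^ i ∧
      i * (η ^ 2 * Fintype.card (V × V)) ≤ cellEnergy (Prod.map g g) F := by
    intro i
    induction i with
    | zero => exact fun _ => ⟨ι, inferInstance, f, fun _ _ h => h, by simp,
        by simp [cellEnergy_nonneg]⟩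
    | succ i ih =>
      intro hi
      obtain ⟨κ, _, g, hfg, hcard, energy⟩ := ih (by lia)
      obtain ⟨S, T, hST⟩ := exists_cellEnergy_splitLabel_gt hfg h0 h1 hη <| no_good _ _ g hfg <|
        hcard.trans (Nat.mul_le_mul_left _ (Nat.pow_le_pow_right four_pos (by lia)))
      refine ⟨κ × Bool × Bool, inferInstance, splitLabel g S T,
        fun _ _ h => hfg (factorsThrough_splitLabel g S T h), ?_, ?_⟩
      · simp only [Fintype.card_prod, Fintype.card_bool, pow_succ, ← mul_assoc]
        lia
      · push_cast
        linarith
  obtain ⟨κ, _, g, hfg, hcard, energy⟩ := chain N le_rfl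
  obtain ⟨S, T, hST⟩ := exists_cellEnergy_splitLabel_gt hfg h0 h1 hη (no_good _ _ g hfg hcard)
  have energy_le := cellEnergy_le_card (g := Prod.map (splitLabel g S T) (splitLabel g S T)) h0 h1
  have N_large : 1 ≤ N * η ^ 2 := by
    rw [← div_le_iff₀ (by positivity)]
    exact Nat.le_ceil _
  nlinarith [Nat.cast_nonneg (α := ℝ) (Fintype.card (V × V)), sq_nonneg η]

end WeakRegularity

/-! ### The entropy decrement -/

section EntropyDecrement

variable {V : Type*} [Fintype V] {F : V × V → ℝ}

/-- The entropies of the partitions produced by iterating weak regularity start at the entropy of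
the trivial partition and are never negative, so one of the first `T` steps loses at most `θ`. -/
theorem exists_edgeWeight_near_of_cellEntropy_lt (hF : IsEdgeWeight F) {y η : ℕ → ℝ}
    (hy0 : 1 ≤ y 0) (hη : ∀ i, 0 < η i) (hy : ∀ i, y i * 4 ^ ⌈1 / η i ^ 2⌉₊ ≤ y (i + 1))
    {θ : ℝ} {T : ℕ}
    (hT : cellEntropy (Prod.map (Function.const V ()) (Function.const V ())) F < T * θ) :
    ∃ i < T, ∃ (ι : Type) (_ : Fintype ι) (f : V → ι) (W : V × V → ℝ),
      Fintype.card ι ≤ y i ∧ IsEdgeWeight W ∧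
      (∑ ω, |W ω - F ω|) ^ 2 ≤ 4 * (∑ ω, F ω) * θ ∧
      cutNorm (W - cellAvg (Prod.map f f) F) ≤ η i * Fintype.card (V × V) := by
  by_contra! no_good
  have chain : ∀ i ≤ T, ∃ (ι : Type) (_ : Fintype ι) (f : V → ι), Fintype.card ι ≤ y i ∧
      cellEntropy (Prod.map f f) F + i * θ ≤
        cellEntropy (Prod.map (Function.const V ()) (Function.const V ())) F := by
    intro i
    induction i with
    | zero =>
      exact fun _ => ⟨Unit, inferInstance, Function.const V (), by simpa using hy0, by simp⟩
    | succ i ih =>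
      intro hi
      obtain ⟨ι, _, f, hcard, entropy⟩ := ih (by lia)
      obtain ⟨κ, _, g, hfg, hcard', cut⟩ :=
        exists_cutNorm_tilt_sub_le f hF.nonneg hF.le_one (hη i)
      have hfg' := factorsThrough_prodMap hfg
      refine ⟨κ, inferInstance, g, ?_, ?_⟩
      · calc (Fintype.card κ : ℝ) ≤ Fintype.card ι * 4 ^ ⌈1 / η i ^ 2⌉₊ := by exact_mod_cast hcard'
          _ ≤ y i * 4 ^ ⌈1 / η i ^ 2⌉₊ := by gcongr
          _ ≤ y (i + 1) := hy i
      · by_contra! small_loss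
        refine (no_good i (by lia) ι _ f _ hcard (isEdgeWeight_tilt g f hF) ?_).not_ge cut
        rw [sum_abs_tilt_sub hfg' hF.nonneg hF.le_one]
        refine (sq_sum_abs_cellAvg_sub_le hfg' hF.nonneg).trans ?_
        have sum_nonneg : 0 ≤ ∑ ω, F ω := sum_nonneg fun ω _ => hF.nonneg ω
        push_cast at small_loss
        gcongr
        linarith
  obtain ⟨ι, _, f, -, entropy⟩ := chain T le_rfl
  linarith [cellEntropy_nonneg (g := Prod.map f f) hF.nonneg hF.le_one]

end EntropyDecrement

/-! ### Randomised rounding -/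

section Rounding

open MeasureTheory ProbabilityTheory

variable {I : Type*} [Fintype I]

lemma hasSubgaussianMGF_mul_indicator_sub (p : unitInterval) {a : ℝ} (ha : |a| ≤ 1) :
    HasSubgaussianMGF (fun z : Prop => a * ((if z then 1 else 0) - p)) (1 / 4)
      (bernoulliMeasure True False p) := by
  have hmem (z : Prop) : a * (if z then 1 else 0) ∈ Set.Icc (min 0 a) (min 0 a + 1) := by
    rcases abs_le.1 ha with ⟨h1, h2⟩
    rcases le_total 0 a with h | h <;> split_ifs <;> simp [h] <;> linarith
  convert hasSubgaussianMGF_of_mem_Icc (μ := bernoulliMeasure True False p)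
    (X := fun z : Prop => a * (if z then 1 else 0)) Measurable.of_discrete.aemeasurable
    (.of_forall hmem) using 1
  · ext z
    simp [integral_bernoulliMeasure, mul_sub, mul_comm]
  · norm_num

lemma measureReal_pi_bernoulliMeasure_sum_ge_le (w : I → unitInterval) {a : I → ℝ}
    (ha : ∀ i, |a i| ≤ 1) {t : ℝ} (ht : 0 ≤ t) :
    (Measure.pi fun i => bernoulliMeasure True False (w i)).real
      {S | t ≤ ∑ i, a i * ((if S i then 1 else 0) - w i)} ≤
        Real.exp (-(2 * t ^ 2 / Fintype.card I)) := by
  set μ := Measure.pi fun i => bernoulliMeasure True False (w i)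
  have hindep : iIndepFun (fun i (S : I → Prop) => a i * ((if S i then 1 else 0) - w i)) μ :=
    iIndepFun_pi (X := fun i (z : Prop) => a i * ((if z then 1 else 0) - (w i : ℝ)))
      fun i => Measurable.of_discrete.aemeasurable
  have hsub (i : I) :
      HasSubgaussianMGF (fun S : I → Prop => a i * ((if S i then 1 else 0) - w i)) (1 / 4) μ := by
    refine HasSubgaussianMGF.of_map (μ := μ) (Y := fun S : I → Prop => S i)
      (X := fun z : Prop => a i * ((if z then 1 else 0) - w i))
      (measurable_pi_apply i).aemeasurable ?_
    have hmap := (measurePreserving_eval (fun i => bernoulliMeasure True False (w i)) i).map_eq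
    exact hmap ▸ hasSubgaussianMGF_mul_indicator_sub (w i) (ha i)
  refine (HasSubgaussianMGF.measure_sum_ge_le_of_iIndepFun hindep (s := univ)
    (fun i _ => hsub i) ht).trans_eq ?_
  congr 1
  push_cast
  rw [sum_const, card_univ, nsmul_eq_mul, ← neg_div]
  rcases eq_or_ne (Fintype.card I : ℝ) 0 with h | h
  · simp [h]
  · field_simp
    ring

theorem exists_set_forall_abs_sum_lt {J : Type*} [Fintype J] (w : I → unitInterval)
    {a : J → I → ℝ} (ha : ∀ j i, |a j i| ≤ 1) {t : ℝ} (ht : 0 ≤ t)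
    (hJ : 2 * Fintype.card J < Real.exp (2 * t ^ 2 / Fintype.card I)) :
    ∃ S : Set I, ∀ j, |∑ i, a j i * ((if i ∈ S then 1 else 0) - w i)| < t := by
  set μ := Measure.pi fun i => bernoulliMeasure True False (w i)
  set bad : J × ℤˣ → Set (I → Prop) := fun x =>
    {S | t ≤ ∑ i, ((x.2 : ℤ) : ℝ) * a x.1 i * ((if S i then 1 else 0) - w i)}
  have hbad (x : J × ℤˣ) : μ.real (bad x) ≤ Real.exp (-(2 * t ^ 2 / Fintype.card I)) :=
    measureReal_pi_bernoulliMeasure_sum_ge_le w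
      (fun i => by rcases Int.units_eq_one_or x.2 with h | h <;> simpa [h] using ha x.1 i) ht
  have hunion : μ.real (⋃ x, bad x) < 1 := by
    calc μ.real (⋃ x, bad x) ≤ ∑ x, μ.real (bad x) := measureReal_iUnion_fintype_le _
      _ ≤ ∑ _x : J × ℤˣ, Real.exp (-(2 * t ^ 2 / Fintype.card I)) := sum_le_sum fun x _ => hbad x
      _ = 2 * Fintype.card J / Real.exp (2 * t ^ 2 / Fintype.card I) := by
        simp [Real.exp_neg, div_eq_mul_inv, mul_comm]
      _ < 1 := (div_lt_one (Real.exp_pos _)).2 hJ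
  obtain ⟨S, hS⟩ : (⋃ x, bad x)ᶜ.Nonempty := by
    refine Set.nonempty_compl.2 fun h => ?_
    simp [h] at hunion
  have hlt (x : J × ℤˣ) :
      ∑ i, ((x.2 : ℤ) : ℝ) * a x.1 i * ((if S i then 1 else 0) - w i) < t :=
    not_le.1 fun h => hS (Set.mem_iUnion.2 ⟨x, h⟩)
  refine ⟨{i | S i}, fun j => abs_lt.2 ⟨?_, ?_⟩⟩
  · simpa [neg_lt] using hlt (j, -1)
  · simpa using hlt (j, 1)

end Rounding

/-! ### Adjacency indicators -/

section AdjInd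

variable {V : Type*}

/-- The adjacency matrix of a graph, as a function of an ordered pair of vertices. -/
noncomputable def adjInd (G : SimpleGraph V) (ω : V × V) : ℝ :=
  if G.Adj ω.1 ω.2 then 1 else 0

lemma isEdgeWeight_adjInd (G : SimpleGraph V) : IsEdgeWeight (adjInd G) where
  nonneg ω := by unfold adjInd; positivity
  le_one ω := by unfold adjInd; split_ifs <;> norm_num
  swap ω := by simp [adjInd, G.adj_comm]

variable [Fintype V]

lemma sum_product_adjInd (G : SimpleGraph V) (A B : Finset V) :
    ∑ ω ∈ A ×ˢ B, adjInd G ω = eCnt G A B := by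
  simp [eCnt, adjInd, sum_boole]

lemma sum_adjInd (G : SimpleGraph V) : ∑ ω, adjInd G ω = 2 * G.edgeSet.ncard := by
  have hdeg (x : V) : ∑ y, adjInd G (x, y) = G.degree x := by
    simp [adjInd, sum_boole, ← SimpleGraph.card_neighborFinset_eq_degree,
      SimpleGraph.neighborFinset_eq_filter]
  rw [Fintype.sum_prod_type, ← SimpleGraph.coe_edgeFinset G, Set.ncard_coe_finset]
  simp only [hdeg]
  exact_mod_cast G.sum_degrees_eq_twice_card_edges

lemma two_mul_ncard_symmDiff_edgeSet (G G' : SimpleGraph V) :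
    2 * ((symmDiff G.edgeSet G'.edgeSet).ncard : ℝ) = ∑ ω, |adjInd G' ω - adjInd G ω| := by
  have h : symmDiff G.edgeSet G'.edgeSet = (symmDiff G G').edgeSet := by
    simp [symmDiff, SimpleGraph.edgeSet_sup, SimpleGraph.edgeSet_sdiff]
  rw [h, ← sum_adjInd]
  refine sum_congr rfl fun ω _ => ?_
  by_cases h1 : G.Adj ω.1 ω.2 <;> by_cases h2 : G'.Adj ω.1 ω.2 <;>
    simp [adjInd, symmDiff, h1, h2]

end AdjInd

/-! ### Rounding an edge weight to a graph -/

section GraphRounding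

variable {V : Type*} [Fintype V]

lemma card_filter_offDiag_mk_eq_le_two (e : Sym2 V) :
    #{ω ∈ (univ : Finset V).offDiag | s(ω.1, ω.2) = e} ≤ 2 := by
  induction e using Sym2.ind with
  | _ x y =>
    refine (card_le_card (t := {(x, y), (y, x)}) fun ω hω => ?_).trans card_le_two
    simpa [Prod.ext_iff] using (mem_filter.1 hω).2

lemma card_sym2_le_sq (V : Type*) [Fintype V] : Fintype.card (Sym2 V) ≤ Fintype.card V ^ 2 := by
  rw [sq, ← Fintype.card_prod]
  exact Fintype.card_le_of_surjective (fun ω : V × V => s(ω.1, ω.2))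
    fun e => Sym2.ind (fun x y => ⟨(x, y), rfl⟩) e

theorem exists_graph_forall_abs_sum_le {J : Type*} [Fintype J] {W : V × V → ℝ}
    (hW : IsEdgeWeight W) {a : J → V × V → ℝ} (ha : ∀ j ω, |a j ω| ≤ 1) {t : ℝ} (ht : 0 ≤ t)
    (hJ : 2 * Fintype.card J < Real.exp (t ^ 2 / (2 * Fintype.card V ^ 2))) :
    ∃ G : SimpleGraph V, ∀ j, |∑ ω ∈ univ.offDiag, a j ω * (adjInd G ω - W ω)| ≤ t := by
  set φ : V × V → Sym2 V := fun ω => s(ω.1, ω.2)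
  set w : Sym2 V → unitInterval := fun e =>
    Sym2.lift ⟨fun x y => ⟨W (x, y), hW.nonneg _, hW.le_one _⟩,
      fun x y => Subtype.ext (hW.swap (x, y)).symm⟩ e
  set b : J → Sym2 V → ℝ := fun j e => (∑ ω ∈ univ.offDiag with φ ω = e, a j ω) / 2
  have hb (j : J) (e : Sym2 V) : |b j e| ≤ 1 := by
    have hsum : |∑ ω ∈ univ.offDiag with φ ω = e, a j ω| ≤ 2 := calc
      _ ≤ ∑ ω ∈ univ.offDiag with φ ω = e, |a j ω| := abs_sum_le_sum_abs _ _
      _ ≤ #{ω ∈ (univ : Finset V).offDiag | φ ω = e} := by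
        simpa using sum_le_card_nsmul _ _ 1 fun ω _ => ha j ω
      _ ≤ 2 := mod_cast card_filter_offDiag_mk_eq_le_two e
    rw [abs_div, abs_two]
    linarith
  have hexp : t ^ 2 / (2 * Fintype.card V ^ 2) ≤ 2 * (t / 2) ^ 2 / Fintype.card (Sym2 V) := by
    rcases isEmpty_or_nonempty V with hV | hV
    · simp
    have hpos : (0 : ℝ) < Fintype.card (Sym2 V) :=
      mod_cast Fintype.card_pos_iff.2 (hV.map Sym2.diag)
    have hle : (Fintype.card (Sym2 V) : ℝ) ≤ Fintype.card V ^ 2 := mod_cast card_sym2_le_sq V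
    calc t ^ 2 / (2 * Fintype.card V ^ 2) ≤ t ^ 2 / (2 * Fintype.card (Sym2 V)) := by gcongr
      _ = 2 * (t / 2) ^ 2 / Fintype.card (Sym2 V) := by ring
  obtain ⟨S, hS⟩ := exists_set_forall_abs_sum_lt w hb (by positivity)
    (hJ.trans_le (Real.exp_le_exp.2 hexp))
  refine ⟨.fromEdgeSet S, fun j => ?_⟩
  have hsum : ∑ ω ∈ univ.offDiag, a j ω * (adjInd (.fromEdgeSet S) ω - W ω) =
      2 * ∑ e, b j e * ((if e ∈ S then 1 else 0) - w e) := by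
    rw [← sum_fiberwise _ φ, mul_sum]
    refine sum_congr rfl fun e _ => ?_
    rw [← mul_assoc, mul_div_cancel₀ _ two_ne_zero, sum_mul]
    refine sum_congr rfl fun ω hω => ?_
    obtain ⟨hne, rfl⟩ := mem_filter.1 hω
    simp [adjInd, (mem_offDiag.1 hne).2.2, φ, w]
  rw [hsum, abs_mul, abs_two]
  linarith [hS j]

lemma two_mul_two_pow_add_one_lt_exp {n : ℕ} (hn : n ≠ 0) :
    2 * ((2 : ℝ) ^ n * 2 ^ n + 1) < Real.exp (9 / 2 * n) := by
  have he : (16 : ℝ) < Real.exp (9 / 2) := by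
    have h3 : Real.exp 3 = Real.exp 1 ^ 3 := by rw [← Real.exp_nat_mul]; norm_num
    have h27 : (2.7 : ℝ) ^ 3 ≤ Real.exp 1 ^ 3 := by gcongr; linarith [Real.exp_one_gt_d9]
    linarith [Real.exp_le_exp.2 (show (3 : ℝ) ≤ 9 / 2 by norm_num)]
  have h4 : (4 : ℝ) ≤ 4 ^ n := le_self_pow₀ (by norm_num) hn
  calc 2 * ((2 : ℝ) ^ n * 2 ^ n + 1) = 2 * (4 ^ n + 1) := by rw [← mul_pow]; norm_num
    _ ≤ 4 ^ n * 4 ^ n := by nlinarith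
    _ = 16 ^ n := by rw [← mul_pow]; norm_num
    _ < Real.exp (9 / 2) ^ n := by gcongr
    _ = Real.exp (9 / 2 * n) := by rw [← Real.exp_nat_mul, mul_comm]

lemma sum_abs_adjInd_sub_le {W : V × V → ℝ} (hW : IsEdgeWeight W) (G G' : SimpleGraph V) :
    ∑ ω, |adjInd G' ω - adjInd G ω| ≤ ∑ ω, |W ω - adjInd G ω| +
      ∑ ω ∈ univ.offDiag, (1 - 2 * adjInd G ω) * (adjInd G' ω - W ω) := by
  have hsign {x : ℝ} (hx : x ∈ Set.Icc (0 : ℝ) 1) (ω : V × V) :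
      |x - adjInd G ω| = (1 - 2 * adjInd G ω) * (x - adjInd G ω) := by
    unfold adjInd
    split_ifs
    · rw [abs_of_nonpos (by linarith [hx.2])]; ring
    · rw [abs_of_nonneg (by linarith [hx.1])]; ring
  have hoff : ∑ ω, |adjInd G' ω - adjInd G ω| =
      ∑ ω ∈ univ.offDiag, |adjInd G' ω - adjInd G ω| := by
    refine (sum_subset (subset_univ _) fun ω _ hω => ?_).symm
    have hdiag : ω.1 = ω.2 := by simpa using hω
    simp [adjInd, hdiag]
  calc ∑ ω, |adjInd G' ω - adjInd G ω|
      = ∑ ω ∈ univ.offDiag, |W ω - adjInd G ω| +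
        ∑ ω ∈ univ.offDiag, (1 - 2 * adjInd G ω) * (adjInd G' ω - W ω) := by
        rw [hoff, ← sum_add_distrib]
        refine sum_congr rfl fun ω _ => ?_
        have hG' := isEdgeWeight_adjInd G'
        rw [hsign ⟨hG'.nonneg ω, hG'.le_one ω⟩, hsign ⟨hW.nonneg ω, hW.le_one ω⟩]
        ring
    _ ≤ _ := by
        gcongr
        exact subset_univ _

lemma abs_sum_product_adjInd_sub_le {W : V × V → ℝ} (hW : IsEdgeWeight W) (G : SimpleGraph V)
    (A B : Finset V) :
    |∑ ω ∈ A ×ˢ B, (adjInd G ω - W ω)| ≤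
      |∑ ω ∈ univ.offDiag, (if ω ∈ A ×ˢ B then 1 else 0) * (adjInd G ω - W ω)| +
        Fintype.card V := by
  set H : V × V → ℝ := fun ω => (if ω ∈ A ×ˢ B then 1 else 0) * (adjInd G ω - W ω)
  have hsplit : ∑ ω ∈ A ×ˢ B, (adjInd G ω - W ω) =
      ∑ ω ∈ univ.offDiag, H ω + ∑ ω ∈ univ.diag, H ω := by
    rw [← sum_union (disjoint_diag_offDiag _).symm, union_comm, diag_union_offDiag,
      univ_product_univ]
    simp only [H, ite_mul, one_mul, zero_mul, sum_ite_mem, univ_inter]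
  have hdiag : |∑ ω ∈ univ.diag, H ω| ≤ Fintype.card V := by
    have hH (ω) (hω : ω ∈ (univ : Finset V).diag) : |H ω| ≤ 1 := by
      have hzero : adjInd G ω = 0 := by simp [adjInd, (mem_diag.1 hω).2]
      simp only [H, hzero, zero_sub, abs_mul, abs_neg, abs_of_nonneg (hW.nonneg ω)]
      split_ifs <;> simp [hW.le_one ω]
    calc |∑ ω ∈ univ.diag, H ω| ≤ ∑ ω ∈ univ.diag, |H ω| := abs_sum_le_sum_abs _ _
      _ ≤ Fintype.card V := by simpa using sum_le_card_nsmul _ _ 1 hH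
  rw [hsplit]
  exact (abs_add_le _ _).trans (by gcongr)

theorem exists_graph_near [Nonempty V] {W : V × V → ℝ} (hW : IsEdgeWeight W)
    (G : SimpleGraph V) :
    ∃ G' : SimpleGraph V,
      ∑ ω, |adjInd G' ω - adjInd G ω| ≤
        ∑ ω, |W ω - adjInd G ω| + 3 * Fintype.card V * √(Fintype.card V) ∧
      cutNorm (adjInd G' - W) ≤ 3 * Fintype.card V * √(Fintype.card V) + Fintype.card V := by
  set n := Fintype.card V
  have hn : n ≠ 0 := Fintype.card_ne_zero
  set a : Option (Finset V × Finset V) → V × V → ℝ := fun j ω =>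
    j.elim (1 - 2 * adjInd G ω) fun R => if ω ∈ R.1 ×ˢ R.2 then 1 else 0
  have ha (j) (ω : V × V) : |a j ω| ≤ 1 := by
    rcases j with _ | R
    · simp only [a, Option.elim_none, adjInd]; split_ifs <;> norm_num
    · simp only [a, Option.elim_some]; split_ifs <;> simp
  have hcard : 2 * (Fintype.card (Option (Finset V × Finset V)) : ℝ) <
      Real.exp ((3 * n * √n) ^ 2 / (2 * n ^ 2)) := by
    have hexp : (3 * n * √n) ^ 2 / (2 * n ^ 2 : ℝ) = 9 / 2 * n := by
      rw [mul_pow, Real.sq_sqrt (Nat.cast_nonneg n)]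
      field_simp
      norm_num
    rw [hexp]
    simpa [n] using two_mul_two_pow_add_one_lt_exp hn
  obtain ⟨G', hG'⟩ := exists_graph_forall_abs_sum_le hW ha (by positivity) hcard
  refine ⟨G', (sum_abs_adjInd_sub_le hW G G').trans ?_, cutNorm_le fun A B =>
    (abs_sum_product_adjInd_sub_le hW G' A B).trans ?_⟩
  · gcongr
    exact (le_abs_self _).trans (hG' none)
  · gcongr
    exact hG' (some (A, B))

end GraphRounding

/-! ### Splitting the parts of an equipartition -/

section Split

variable {V κ : Type*}

/-- A set of vertices all of which carry the same label. -/
def IsMonochromatic (f : V → κ) (B : Finset V) : Prop :=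
  ∀ x ∈ B, ∀ y ∈ B, f x = f y

lemma exists_mul_add_mul_succ_eq {r m N : ℕ} (h1 : r * m ≤ N) (h2 : N ≤ r * (m + 1)) :
    ∃ a b, a + b = r ∧ a * m + b * (m + 1) = N := by
  obtain ⟨b, rfl⟩ := Nat.exists_eq_add_of_le h1
  obtain ⟨a, rfl⟩ := Nat.exists_eq_add_of_le' (show b ≤ r by linarith)
  exact ⟨a, b, rfl, by ring⟩

variable [DecidableEq V] {s : Finset V} {a b r m : ℕ}

/-- The points of parts of `P` not covered by pieces inside them number at most `#P.parts * m`. -/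
lemma card_equitabilise_not_subset_le (P : Finpartition s) (h : a * m + b * (m + 1) = #s)
    (hm : 0 < m) :
    #{B ∈ (P.equitabilise h).parts | ∀ A ∈ P.parts, ¬ B ⊆ A} ≤ #P.parts := by
  set Q := P.equitabilise h
  set D := {B ∈ Q.parts | ∀ A ∈ P.parts, ¬ B ⊆ A}
  have hcover : D.biUnion id ⊆ P.parts.biUnion fun A => A \ {u ∈ Q.parts | u ⊆ A}.biUnion id := by
    intro x hx
    obtain ⟨B, hB, hxB⟩ := mem_biUnion.1 hx
    obtain ⟨hBQ, hBD⟩ := mem_filter.1 hB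
    obtain ⟨A, hA, hxA⟩ := P.exists_mem (Q.subset hBQ hxB)
    refine mem_biUnion.2 ⟨A, hA, mem_sdiff.2 ⟨hxA, fun hxU => ?_⟩⟩
    obtain ⟨u, hu, hxu⟩ := mem_biUnion.1 hxU
    obtain ⟨huQ, huA⟩ := mem_filter.1 hu
    exact hBD A hA (Q.eq_of_mem_parts hBQ huQ hxB hxu ▸ huA)
  refine Nat.le_of_mul_le_mul_right ?_ hm
  calc #D * m ≤ ∑ B ∈ D, #B := card_nsmul_le_sum _ _ _ fun B hB => by
        rcases Finpartition.card_eq_of_mem_parts_equitabilise (mem_filter.1 hB).1 with h | h <;>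
          simp [h]
    _ = #(D.biUnion id) := (card_biUnion fun x hx y hy hxy =>
        Q.disjoint (mem_filter.1 hx).1 (mem_filter.1 hy).1 hxy).symm
    _ ≤ _ := card_le_card hcover
    _ ≤ #P.parts * m := card_biUnion_le_card_mul _ _ _ fun A hA =>
        P.card_parts_equitabilise_subset_le h hA

variable [Fintype κ]

lemma exists_finpartition_card_not_isMonochromatic_le (f : V → κ)
    (h : a * m + b * (m + 1) = #s) (hm : 0 < m) :
    ∃ Q : Finpartition s, #Q.parts = a + b ∧ (∀ B ∈ Q.parts, #B = m ∨ #B = m + 1) ∧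
      #{B ∈ Q.parts | ¬ IsMonochromatic f B} ≤ Fintype.card κ := by
  set P : Finpartition s := Finpartition.ofSetSetoid (Setoid.ker f) s
  have hmono (A) (hA : A ∈ P.parts) : IsMonochromatic f A := by
    obtain ⟨x, -, rfl⟩ := mem_image.1 hA
    simp only [IsMonochromatic, mem_filter, Setoid.ker_def]
    rintro y ⟨-, hy⟩ z ⟨-, hz⟩
    exact hy.symm.trans hz
  have hP : #P.parts ≤ Fintype.card κ := by
    calc #P.parts ≤ #((univ : Finset κ).image fun k => {x ∈ s | k = f x}) :=
          card_le_card <| image_subset_iff.2 fun x _ => mem_image.2 ⟨f x, mem_univ _, rfl⟩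
      _ ≤ Fintype.card κ := card_image_le
  refine ⟨P.equitabilise h, P.card_parts_equitabilise h hm.ne',
    fun B hB => Finpartition.card_eq_of_mem_parts_equitabilise hB,
    (card_le_card fun B hB => ?_).trans ((card_equitabilise_not_subset_le P h hm).trans hP)⟩
  obtain ⟨hBQ, hB⟩ := mem_filter.1 hB
  exact mem_filter.2 ⟨hBQ, fun A hA hBA => hB fun x hx y hy => hmono A hA x (hBA hx) y (hBA hy)⟩

theorem exists_refinement_card_not_isMonochromatic_le (P : Finpartition s) (f : V → κ)
    (hm : 0 < m) (hP : ∀ A ∈ P.parts, r * m ≤ #A ∧ #A ≤ r * (m + 1)) :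
    ∃ Z ≤ P, #Z.parts = #P.parts * r ∧ (∀ B ∈ Z.parts, #B = m ∨ #B = m + 1) ∧
      #{B ∈ Z.parts | ¬ IsMonochromatic f B} ≤ #P.parts * Fintype.card κ := by
  have hsplit (A) (hA : A ∈ P.parts) : ∃ Q : Finpartition A, #Q.parts = r ∧
      (∀ B ∈ Q.parts, #B = m ∨ #B = m + 1) ∧
      #{B ∈ Q.parts | ¬ IsMonochromatic f B} ≤ Fintype.card κ := by
    obtain ⟨a, b, rfl, h⟩ := exists_mul_add_mul_succ_eq (hP A hA).1 (hP A hA).2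
    exact exists_finpartition_card_not_isMonochromatic_le f h hm
  choose Q hQcard hQsize hQmono using hsplit
  refine ⟨P.bind Q, fun B hB => ?_, ?_, fun B hB => ?_, ?_⟩
  · obtain ⟨A, hA, hB⟩ := Finpartition.mem_bind.1 hB
    exact ⟨A, hA, (Q A hA).le hB⟩
  · rw [Finpartition.card_bind, sum_congr rfl fun A _ => hQcard A.1 A.2]
    simp
  · obtain ⟨A, hA, hB⟩ := Finpartition.mem_bind.1 hB
    exact hQsize A hA B hB
  · calc
      _ ≤ #(P.parts.attach.biUnion fun A => {B ∈ (Q A.1 A.2).parts | ¬ IsMonochromatic f B}) := by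
          refine card_le_card fun B hB => ?_
          obtain ⟨hBZ, hB⟩ := mem_filter.1 hB
          obtain ⟨A, hA, hBA⟩ := Finpartition.mem_bind.1 hBZ
          exact mem_biUnion.2 ⟨⟨A, hA⟩, mem_attach _ _, mem_filter.2 ⟨hBA, hB⟩⟩
      _ ≤ #P.parts.attach * Fintype.card κ :=
          card_biUnion_le_card_mul _ _ _ fun A _ => hQmono A.1 A.2
      _ = #P.parts * Fintype.card κ := by rw [card_attach]

theorem exists_equipartition_card_not_isMonochromatic_le {P : Finpartition s}
    (hP : P.IsEquipartition) (f : V → κ) (hr : 0 < r) (hk : 0 < #P.parts)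
    (hn : #P.parts * r ≤ #s) :
    ∃ m > 0, ∃ Z ≤ P, Z.IsEquipartition ∧ #Z.parts = #P.parts * r ∧
      (∀ B ∈ Z.parts, #B = m ∨ #B = m + 1) ∧
      #{B ∈ Z.parts | ¬ IsMonochromatic f B} ≤ #P.parts * Fintype.card κ := by
  set q := #s / #P.parts
  have hm : 0 < q / r := Nat.div_pos ((Nat.le_div_iff_mul_le hk).2 (by rwa [mul_comm])) hr
  have hlt : q < r * (q / r + 1) := Nat.lt_mul_div_succ q hr
  have hsize (A) (hA : A ∈ P.parts) : r * (q / r) ≤ #A ∧ #A ≤ r * (q / r + 1) := by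
    have hle : r * (q / r) ≤ q := Nat.mul_div_le q r
    rcases hP.card_parts_eq_average hA with h | h <;> omega
  obtain ⟨Z, hZP, hcard, hZ, hmono⟩ := exists_refinement_card_not_isMonochromatic_le P f hm hsize
  exact ⟨q / r, hm, Z, hZP, Set.equitableOn_iff_exists_eq_eq_add_one.2 ⟨q / r, hZ⟩, hcard, hZ,
    hmono⟩

end Split

/-! ### Regular pairs and regular partitions -/

section Regular

variable {V κ : Type*} {ε : ℝ} {A B A' : Finset V}

lemma nonempty_of_mul_card_le_card (hε : 0 < ε) (hA : A.Nonempty) (h : ε * #A ≤ #A') :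
    A'.Nonempty := by
  have : (0 : ℝ) < #A := mod_cast hA.card_pos
  have hA' : (0 : ℝ) < #A' := lt_of_lt_of_le (by positivity) h
  exact card_pos.1 (mod_cast hA')

variable [Fintype V] {G : SimpleGraph V}

lemma regPair_singleton (G : SimpleGraph V) (hε : 0 < ε) (a b : V) : RegPair G ε {a} {b} := by
  have hfull {x : V} {S : Finset V} (hS : S ⊆ {x}) (h : ε * #({x} : Finset V) ≤ #S) : S = {x} :=
    (subset_singleton_iff.1 hS).resolve_left
      (nonempty_of_mul_card_le_card hε (singleton_nonempty x) h).ne_empty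
  intro A' hA' B' hB' h1 h2
  rw [hfull hA' h1, hfull hB' h2, sub_self, abs_zero]
  exact hε.le

lemma dens_top (hAB : Disjoint A B) (hA : A.Nonempty) (hB : B.Nonempty) :
    _root_.dens (⊤ : SimpleGraph V) A B = 1 := by
  have hcount : eCnt (⊤ : SimpleGraph V) A B = #A * #B := by
    rw [eCnt, ← card_product]
    convert card_filter_eq_iff.2 fun ω hω => ?_
    exact disjoint_iff_ne.1 hAB _ (mem_product.1 hω).1 _ (mem_product.1 hω).2
  rw [_root_.dens, hcount, Nat.cast_mul]
  have := hA.card_pos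
  have := hB.card_pos
  field_simp

lemma regPair_top (hε : 0 < ε) (hAB : Disjoint A B) (hA : A.Nonempty) (hB : B.Nonempty) :
    RegPair (⊤ : SimpleGraph V) ε A B := by
  intro A' hA' B' hB' h1 h2
  rw [dens_top hAB hA hB, dens_top (hAB.mono hA' hB') (nonempty_of_mul_card_le_card hε hA h1)
    (nonempty_of_mul_card_le_card hε hB h2), sub_self, abs_zero]
  exact hε.le

lemma regPair_of_abs_dens_sub_le {t : ℝ} (hε1 : ε ≤ 1)
    (h : ∀ A' ⊆ A, ∀ B' ⊆ B, ε * #A ≤ #A' → ε * #B ≤ #B' → |_root_.dens G A' B' - t| ≤ ε / 2) :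
    RegPair G ε A B := by
  intro A' hA' B' hB' h1 h2
  have hfull := h A subset_rfl B subset_rfl (mul_le_of_le_one_left (Nat.cast_nonneg _) hε1)
    (mul_le_of_le_one_left (Nat.cast_nonneg _) hε1)
  calc _ ≤ |_root_.dens G A B - t| + |t - _root_.dens G A' B'| := abs_sub_le _ _ _
    _ ≤ ε / 2 + ε / 2 := by
      rw [abs_sub_comm t]
      exact add_le_add hfull (h A' hA' B' hB' h1 h2)
    _ = ε := add_halves ε

lemma regPair_of_cutNorm_le {W : V × V → ℝ} {t s : ℝ} (hε : 0 < ε) (hε1 : ε ≤ 1) (hs : 0 < s)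
    (hcut : cutNorm (adjInd G - W) ≤ ε ^ 3 * s ^ 2 / 2) (hA : s ≤ #A) (hB : s ≤ #B)
    (hW : ∀ ω ∈ A ×ˢ B, W ω = t) : RegPair G ε A B := by
  refine regPair_of_abs_dens_sub_le (t := t) hε1 fun A' hA' B' hB' h1 h2 => ?_
  have hεA : ε * s ≤ #A' := (mul_le_mul_of_nonneg_left hA hε.le).trans h1
  have hεB : ε * s ≤ #B' := (mul_le_mul_of_nonneg_left hB hε.le).trans h2
  have hA0 : (0 : ℝ) < #A' := lt_of_lt_of_le (by positivity) hεA
  have hB0 : (0 : ℝ) < #B' := lt_of_lt_of_le (by positivity) hεB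
  have hsum : ∑ ω ∈ A' ×ˢ B', (adjInd G - W) ω = eCnt G A' B' - #A' * #B' * t := by
    simp only [Pi.sub_apply]
    rw [sum_sub_distrib, sum_product_adjInd,
      sum_congr rfl fun ω hω => hW ω (product_subset_product hA' hB' hω)]
    simp
  have hdens : _root_.dens G A' B' - t = (eCnt G A' B' - #A' * #B' * t) / (#A' * #B') := by
    rw [_root_.dens]
    field_simp
  rw [hdens, abs_div, abs_of_pos (mul_pos hA0 hB0), div_le_iff₀ (mul_pos hA0 hB0), ← hsum]
  calc _ ≤ ε ^ 3 * s ^ 2 / 2 := (abs_sum_le_cutNorm _ A' B').trans hcut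
    _ = ε / 2 * (ε * s * (ε * s)) := by ring
    _ ≤ ε / 2 * (#A' * #B') := by gcongr

variable [DecidableEq V]

lemma isRegularPartition_bot (G : SimpleGraph V) (hε : 0 < ε) :
    IsRegularPartition G ε (⊥ : Finpartition (univ : Finset V)) := by
  have hirreg : irregCount G ε (⊥ : Finpartition (univ : Finset V)) = 0 := by
    rw [irregCount, card_eq_zero, filter_eq_empty_iff]
    rintro ⟨A, B⟩ hAB
    simp only [mem_product, Finpartition.mem_bot_iff] at hAB
    obtain ⟨⟨a, -, rfl⟩, ⟨b, -, rfl⟩⟩ := hAB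
    exact not_not.2 (regPair_singleton G hε a b)
  rw [IsRegularPartition, hirreg, Nat.cast_zero]
  positivity

variable {Z : Finpartition (univ : Finset V)}

lemma isRegularPartition_top (hε : 0 < ε) (hZ : 1 / ε ≤ #Z.parts) :
    IsRegularPartition (⊤ : SimpleGraph V) ε Z := by
  have hdiag : irregCount (⊤ : SimpleGraph V) ε Z ≤ #Z.parts := by
    rw [irregCount, ← diag_card Z.parts]
    refine card_le_card fun ⟨A, B⟩ hAB => ?_
    obtain ⟨hAB, hirreg⟩ := mem_filter.1 hAB
    obtain ⟨hA, hB⟩ := mem_product.1 hAB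
    refine mem_diag.2 ⟨hA, by_contra fun hne => hirreg ?_⟩
    exact regPair_top hε (Z.disjoint hA hB hne) (Z.nonempty_of_mem_parts hA)
      (Z.nonempty_of_mem_parts hB)
  rw [div_le_iff₀ hε] at hZ
  calc (irregCount (⊤ : SimpleGraph V) ε Z : ℝ)
      ≤ 1 * #Z.parts := by rw [one_mul]; exact_mod_cast hdiag
    _ ≤ #Z.parts * ε * #Z.parts := by gcongr
    _ = ε * (#Z.parts : ℝ) ^ 2 := by ring

lemma irregCount_le_of_forall_regPair {p : Finset V → Prop}
    (h : ∀ A ∈ Z.parts, ∀ B ∈ Z.parts, p A → p B → RegPair G ε A B) :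
    irregCount G ε Z ≤ 2 * (#{A ∈ Z.parts | ¬ p A} * #Z.parts) := by
  set D := {A ∈ Z.parts | ¬ p A}
  calc irregCount G ε Z ≤ #(D ×ˢ Z.parts ∪ Z.parts ×ˢ D) := by
        refine card_le_card fun ⟨A, B⟩ hAB => ?_
        simp only [D, mem_filter, mem_product, mem_union] at hAB ⊢
        have := h A hAB.1.1 B hAB.1.2
        tauto
    _ ≤ #(D ×ˢ Z.parts) + #(Z.parts ×ˢ D) := card_union_le _ _
    _ = 2 * (#D * #Z.parts) := by rw [card_product, card_product]; ring

variable [Fintype κ] {P : Finpartition (univ : Finset V)} {f : V → κ} {W : V × V → ℝ} {r : ℕ}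

theorem exists_isRegularPartition_of_cutNorm_le (hε : 0 < ε) (hε1 : ε ≤ 1)
    (hP : P.IsEquipartition) (hP0 : 0 < #P.parts) (hW : W.FactorsThrough (Prod.map f f))
    (hr : 0 < r) (hκ : 2 * Fintype.card κ ≤ ε * r) (hn : #P.parts * r ≤ Fintype.card V)
    (hcut : cutNorm (adjInd G - W) ≤
      ε ^ 3 * (Fintype.card V / (2 * (#P.parts * r) : ℝ)) ^ 2 / 2) :
    ∃ Z ≤ P, Z.IsEquipartition ∧ IsRegularPartition G ε Z ∧ #Z.parts = #P.parts * r := by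
  obtain ⟨m, hm, Z, hZP, hZ, hcard, hsize, hmono⟩ :=
    exists_equipartition_card_not_isMonochromatic_le hP f hr hP0 hn
  have : (0 : ℝ) < #P.parts * r := by positivity
  have hm1 : (1 : ℝ) ≤ m := mod_cast hm
  have hnm : Fintype.card V / (2 * (#P.parts * r) : ℝ) ≤ m := by
    have hsum : Fintype.card V ≤ #P.parts * r * (m + 1) := by
      rw [← card_univ, ← Z.sum_card_parts, ← hcard, ← smul_eq_mul]
      exact sum_le_card_nsmul _ _ _ fun B hB => by rcases hsize B hB with h | h <;> omega
    have hsum : (Fintype.card V : ℝ) ≤ #P.parts * r * (m + 1) := mod_cast hsum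
    rw [div_le_iff₀ (by positivity)]
    nlinarith
  have hmcard (B) (hB : B ∈ Z.parts) : (m : ℝ) ≤ #B := by
    rcases hsize B hB with h | h <;> simp [h]
  refine ⟨Z, hZP, hZ, ?_, hcard⟩
  have hirreg : irregCount G ε Z ≤ 2 * (#{A ∈ Z.parts | ¬ IsMonochromatic f A} * #Z.parts) := by
    refine irregCount_le_of_forall_regPair fun A hA B hB hfA hfB => ?_
    obtain ⟨a, ha⟩ := Z.nonempty_of_mem_parts hA
    obtain ⟨b, hb⟩ := Z.nonempty_of_mem_parts hB
    refine regPair_of_cutNorm_le (s := m) (t := W (a, b)) hε hε1 (by positivity)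
      (hcut.trans (by gcongr)) (hmcard A hA) (hmcard B hB) fun ω hω => hW ?_
    obtain ⟨hωA, hωB⟩ := mem_product.1 hω
    exact Prod.ext (hfA _ hωA _ ha) (hfB _ hωB _ hb)
  calc (irregCount G ε Z : ℝ)
      ≤ 2 * (#P.parts * Fintype.card κ * #Z.parts) := by
        exact_mod_cast hirreg.trans (by gcongr)
    _ = #P.parts * (2 * Fintype.card κ) * #Z.parts := by ring
    _ ≤ #P.parts * (ε * r) * #Z.parts := by gcongr
    _ = ε * (#Z.parts : ℝ) ^ 2 := by rw [hcard]; push_cast; ring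

lemma exists_isRegularPartition_card_parts_le {y : ℝ} (hε : 0 < ε) (hε1 : ε ≤ 1)
    (hP : P.IsEquipartition) (hP0 : 0 < #P.parts) (hPy : #P.parts ≤ y) (hεy : 1 / ε ≤ y)
    (hκ : Fintype.card κ ≤ y) (hn : 3 * y ^ 3 ≤ Fintype.card V)
    (hW : W.FactorsThrough (Prod.map f f))
    (hcut : cutNorm (adjInd G - W) ≤ (Fintype.card V : ℝ) ^ 2 / (72 * y ^ 9)) :
    ∃ Z ≤ P, Z.IsEquipartition ∧ IsRegularPartition G ε Z ∧ #Z.parts ≤ 3 * y ^ 3 := by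
  have hy : 1 ≤ y := (one_le_one_div hε hε1).trans hεy
  set r := ⌈2 * y ^ 2⌉₊
  have hr : 0 < r := Nat.ceil_pos.2 (by positivity)
  have hry : (r : ℝ) ≤ 3 * y ^ 2 := by
    linarith [Nat.ceil_lt_add_one (show 0 ≤ 2 * y ^ 2 by positivity), one_le_pow₀ hy (n := 2)]
  have hεy' : 1 ≤ ε * y := by rwa [div_le_iff₀' hε] at hεy
  have hκr : 2 * Fintype.card κ ≤ ε * r := calc
    2 * (Fintype.card κ : ℝ) ≤ 2 * (1 * y) := by linarith
    _ ≤ 2 * (ε * y * y) := by gcongr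
    _ = ε * (2 * y ^ 2) := by ring
    _ ≤ ε * r := by gcongr; exact Nat.le_ceil _
  have hPr : (#P.parts : ℝ) * r ≤ 3 * y ^ 3 := calc
    (#P.parts : ℝ) * r ≤ y * (3 * y ^ 2) := by gcongr
    _ = 3 * y ^ 3 := by ring
  have hcut' : cutNorm (adjInd G - W) ≤
      ε ^ 3 * (Fintype.card V / (2 * (#P.parts * r) : ℝ)) ^ 2 / 2 := calc
    _ ≤ (Fintype.card V : ℝ) ^ 2 / (72 * y ^ 9) := hcut
    _ = (1 / y) ^ 3 * (Fintype.card V / (2 * (3 * y ^ 3))) ^ 2 / 2 := by ring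
    _ ≤ _ := by
      gcongr
      rwa [div_le_comm₀ (by positivity) hε]
  obtain ⟨Z, hZP, hZ, hreg, hcard⟩ := exists_isRegularPartition_of_cutNorm_le hε hε1 hP hP0 hW hr
    hκr (mod_cast hPr.trans hn) hcut'
  exact ⟨Z, hZP, hZ, hreg, by rw [hcard, Nat.cast_mul]; exact hPr⟩

end Regular

/-! ### Towers -/

section Tower

variable {x y : ℝ}

lemma one_add_le_two_rpow (hx : 1 ≤ x) : 1 + x ≤ (2 : ℝ) ^ x := by
  simpa [one_add_one_eq_two] using one_add_mul_self_le_rpow_one_add (s := 1) (by norm_num) hx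

lemma add_natCast_le_two_rpow {k : ℕ} (hx : 1 ≤ x) (hk : k ≤ x) : x + k ≤ (2 : ℝ) ^ x := by
  rcases le_or_gt k 1 with hk1 | hk2
  · have : (k : ℝ) ≤ 1 := mod_cast hk1
    linarith [one_add_le_two_rpow hx]
  · have : (2 : ℝ) ≤ k := mod_cast hk2
    calc x + k ≤ 2 * (1 + (x - 1)) := by linarith
      _ ≤ 2 * (2 : ℝ) ^ (x - 1) := by
        gcongr
        exact one_add_le_two_rpow (by linarith)
      _ = (2 : ℝ) ^ x := by
        rw [Real.rpow_sub_one two_ne_zero]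
        ring

lemma one_le_twrAt (hy : 1 ≤ y) : ∀ n, 1 ≤ twrAt y n
  | 0 => hy
  | n + 1 => Real.one_le_rpow one_le_two (zero_le_one.trans (one_le_twrAt hy n))

lemma one_add_le_twrAt_succ (hy : 1 ≤ y) (n : ℕ) : 1 + twrAt y n ≤ twrAt y (n + 1) :=
  one_add_le_two_rpow (one_le_twrAt hy n)

lemma twrAt_mono (hy : 1 ≤ y) : Monotone (twrAt y) :=
  monotone_nat_of_le_succ fun n => by linarith [one_add_le_twrAt_succ hy n]

lemma natCast_le_twrAt (hy : 1 ≤ y) (n : ℕ) : (n : ℝ) ≤ twrAt y n := by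
  induction n with
  | zero => exact Nat.cast_zero.trans_le (zero_le_one.trans hy)
  | succ n ih =>
    rw [Nat.cast_succ]
    linarith [one_add_le_twrAt_succ hy n]

lemma two_rpow_le_twrAt_succ (hy : 1 ≤ y) {n : ℕ} (hx : x ≤ n) :
    (2 : ℝ) ^ x ≤ twrAt y (n + 1) :=
  Real.rpow_le_rpow_of_exponent_le one_le_two (hx.trans (natCast_le_twrAt hy n))

lemma le_twrAt_of_four_le (hy : 1 ≤ y) {n : ℕ} (hn : 4 ≤ n) : 65536 ≤ twrAt y n := by
  have hsucc {a k : ℕ} (h : (a : ℝ) ≤ twrAt y k) : ((2 ^ a : ℕ) : ℝ) ≤ twrAt y (k + 1) := by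
    rw [Nat.cast_pow, Nat.cast_ofNat, ← Real.rpow_natCast]
    exact Real.rpow_le_rpow_of_exponent_le one_le_two h
  have h0 : ((1 : ℕ) : ℝ) ≤ twrAt y 0 := Nat.cast_one.trans_le hy
  have h4 : (65536 : ℝ) ≤ twrAt y 4 := by simpa using hsucc (hsucc (hsucc (hsucc h0)))
  exact h4.trans (twrAt_mono hy hn)

lemma pow_thirtyTwo_le_two_rpow (hy : 4096 ≤ y) : y ^ 32 ≤ (2 : ℝ) ^ y := calc
  y ^ 32 ≤ ((y / 64) ^ 2) ^ 32 := by
    gcongr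
    nlinarith
  _ = (y / 64) ^ 64 := by ring
  _ ≤ ((2 : ℝ) ^ (y / 64)) ^ 64 := by
    gcongr
    linarith [one_add_le_two_rpow (x := y / 64) (by linarith)]
  _ = (2 : ℝ) ^ y := by
    rw [← Real.rpow_natCast, ← Real.rpow_mul zero_le_two]
    norm_num

lemma twrAt_pow_thirtyTwo_le (hy : 1 ≤ y) {m n : ℕ} (hm : 4 ≤ m) (hmn : m < n) :
    twrAt y m ^ 32 ≤ twrAt y n :=
  (pow_thirtyTwo_le_two_rpow (by linarith [le_twrAt_of_four_le hy hm])).trans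
    (twrAt_mono hy (Nat.succ_le_of_lt hmn))

lemma three_mul_cube_le_pow (hy : 3 ≤ y) : 3 * y ^ 3 ≤ y ^ 32 := calc
  3 * y ^ 3 ≤ y ^ 29 * y ^ 3 := by
    gcongr
    exact hy.trans (le_self_pow₀ (by linarith) (by norm_num))
  _ = y ^ 32 := by ring

lemma mul_four_pow_ceil_le (hy : 4096 ≤ y) :
    y * 4 ^ ⌈1 / (1 / y ^ 10) ^ 2⌉₊ ≤ (2 : ℝ) ^ (2 : ℝ) ^ y := by
  have hceil : (⌈1 / (1 / y ^ 10) ^ 2⌉₊ : ℝ) ≤ y ^ 20 + 1 := by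
    have heq : 1 / (1 / y ^ 10) ^ 2 = y ^ 20 := by field_simp
    rw [heq]
    exact (Nat.ceil_lt_add_one (by positivity)).le
  have hexp : y + 2 * (y ^ 20 + 1) ≤ (2 : ℝ) ^ y := by
    refine le_trans ?_ (pow_thirtyTwo_le_two_rpow hy)
    have h20 : y ≤ y ^ 20 := le_self_pow₀ (by linarith) (by norm_num)
    have h12 : y ≤ y ^ 12 := le_self_pow₀ (by linarith) (by norm_num)
    calc y + 2 * (y ^ 20 + 1) ≤ 4 * y ^ 20 := by linarith
      _ ≤ y ^ 12 * y ^ 20 := by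
        gcongr
        linarith
      _ = y ^ 32 := by ring
  calc y * 4 ^ ⌈1 / (1 / y ^ 10) ^ 2⌉₊
      ≤ (2 : ℝ) ^ y * (2 : ℝ) ^ (2 * (y ^ 20 + 1)) := by
        gcongr
        · linarith [one_add_le_two_rpow (x := y) (by linarith)]
        · rw [← Real.rpow_natCast, show (4 : ℝ) = 2 ^ (2 : ℝ) by norm_num,
            ← Real.rpow_mul zero_le_two]
          gcongr
          exact one_le_two
    _ = (2 : ℝ) ^ (y + 2 * (y ^ 20 + 1)) := (Real.rpow_add two_pos _ _).symm
    _ ≤ (2 : ℝ) ^ (2 : ℝ) ^ y := Real.rpow_le_rpow_of_exponent_le one_le_two hexp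

end Tower

/-! ### Regular approximations -/

section Approximation

variable {V : Type*} [Fintype V]

lemma sum_adjInd_eq_graphDensity_mul_sq [Nonempty V] (G : SimpleGraph V) :
    ∑ ω, adjInd G ω = graphDensity G * (Fintype.card V : ℝ) ^ 2 := by
  rw [sum_adjInd, graphDensity, div_mul_cancel₀ _ (by positivity)]

lemma graphDensity_lt_one [Nonempty V] (G : SimpleGraph V) : graphDensity G < 1 := by
  obtain ⟨v⟩ := ‹Nonempty V›
  have hsum : ∑ ω, adjInd G ω < ∑ _ : V × V, (1 : ℝ) :=
    sum_lt_sum (fun _ _ => (isEdgeWeight_adjInd G).le_one _) ⟨(v, v), mem_univ _, by simp [adjInd]⟩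
  rw [sum_adjInd_eq_graphDensity_mul_sq] at hsum
  refine lt_of_mul_lt_mul_right (hsum.trans_eq ?_) (sq_nonneg (Fintype.card V : ℝ))
  simp [sq]

lemma two_mul_ncard_symmDiff_top_le (G : SimpleGraph V) :
    2 * ((symmDiff G.edgeSet (⊤ : SimpleGraph V).edgeSet).ncard : ℝ) ≤
      (Fintype.card V : ℝ) ^ 2 - ∑ ω, adjInd G ω := by
  rw [two_mul_ncard_symmDiff_edgeSet]
  calc ∑ ω, |adjInd ⊤ ω - adjInd G ω| ≤ ∑ ω, (1 - adjInd G ω) := by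
        refine sum_le_sum fun ω _ => ?_
        by_cases h : G.Adj ω.1 ω.2
        · simp [adjInd, h, h.ne]
        · have htop := isEdgeWeight_adjInd (⊤ : SimpleGraph V)
          simpa [adjInd, h] using abs_le.2 ⟨by linarith [htop.nonneg ω], htop.le_one ω⟩
    _ = (Fintype.card V : ℝ) ^ 2 - ∑ ω, adjInd G ω := by simp [sum_sub_distrib, sq]

variable [DecidableEq V]

/-- The conclusion of the sparse regular approximation lemma: changing at most `δ|E(G)|` edges of
`G` produces a graph with an `ε`-regular equipartition that refines `P` and has order at most
`N`. -/
def HasRegularApproximation (G : SimpleGraph V) (ε δ : ℝ) (P : Finpartition (univ : Finset V))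
    (N : ℝ) : Prop :=
  ∃ G' : SimpleGraph V,
    ((symmDiff G.edgeSet G'.edgeSet).ncard : ℝ) ≤ δ * G.edgeSet.ncard ∧
    ∃ Z : Finpartition (univ : Finset V), Z.IsEquipartition ∧ Z ≤ P ∧
      IsRegularPartition G' ε Z ∧ (#Z.parts : ℝ) ≤ N

variable {G : SimpleGraph V} {P : Finpartition (univ : Finset V)} {ε δ p N : ℝ}

lemma HasRegularApproximation.mono {N' : ℝ} (h : HasRegularApproximation G ε δ P N)
    (hN : N ≤ N') : HasRegularApproximation G ε δ P N' := by
  obtain ⟨G', hG', Z, hZ, hZP, hreg, hcard⟩ := h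
  exact ⟨G', hG', Z, hZ, hZP, hreg, hcard.trans hN⟩

lemma hasRegularApproximation_of_card_le (hε : 0 < ε) (hδ : 0 ≤ δ) (hN : Fintype.card V ≤ N) :
    HasRegularApproximation G ε δ P N := by
  refine ⟨G, ?_, ⊥, Finpartition.bot_isEquipartition _, bot_le, isRegularPartition_bot G hε, ?_⟩
  · rw [symmDiff_self, Set.bot_eq_empty, Set.ncard_empty, Nat.cast_zero]
    positivity
  · rwa [Finpartition.card_bot, card_univ]

lemma exists_isRegularPartition_top_card_parts_le (hε : 0 < ε) (hε1 : ε ≤ 1)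
    (hP : P.IsEquipartition) (hP0 : 0 < #P.parts) (hPε : #P.parts ≤ 1 / ε)
    (hn : (2 : ℝ) ^ (1 / ε) ≤ Fintype.card V) :
    ∃ Z ≤ P, Z.IsEquipartition ∧ IsRegularPartition (⊤ : SimpleGraph V) ε Z ∧
      #Z.parts ≤ (2 : ℝ) ^ (1 / ε) := by
  have hx : 1 ≤ 1 / ε := one_le_one_div hε hε1
  set x := 1 / ε
  have hk : (0 : ℝ) < #P.parts := mod_cast hP0
  set r := ⌈x / #P.parts⌉₊
  have hr : 0 < r := Nat.ceil_pos.2 (by positivity)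
  have hlow : x ≤ #P.parts * r := (div_le_iff₀' hk).1 (Nat.le_ceil _)
  have hupp : (#P.parts * r : ℝ) ≤ 2 ^ x := calc
    (#P.parts * r : ℝ) ≤ #P.parts * (x / #P.parts + 1) := by
      gcongr
      exact (Nat.ceil_lt_add_one (by positivity)).le
    _ = x + #P.parts := by field_simp
    _ ≤ 2 ^ x := add_natCast_le_two_rpow hx hPε
  obtain ⟨m, -, Z, hZP, hZ, hcard, -⟩ := exists_equipartition_card_not_isMonochromatic_le hP
    (fun _ => ()) hr hP0 (mod_cast hupp.trans hn)
  refine ⟨Z, hZP, hZ, isRegularPartition_top hε ?_, ?_⟩ <;> rw [hcard, Nat.cast_mul]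
  exacts [hlow, hupp]

lemma hasRegularApproximation_of_one_le_mul [Nonempty V] (hε : 0 < ε) (hε1 : ε ≤ 1) (hδ : 0 ≤ δ)
    (hG : p ≤ graphDensity G) (hpδ : 1 ≤ p * (1 + δ)) (hP : P.IsEquipartition)
    (hP0 : 0 < #P.parts) (hPε : #P.parts ≤ 1 / ε) (hn : (2 : ℝ) ^ (1 / ε) ≤ Fintype.card V) :
    HasRegularApproximation G ε δ P (2 ^ (1 / ε)) := by
  obtain ⟨Z, hZP, hZ, hreg, hcard⟩ :=
    exists_isRegularPartition_top_card_parts_le hε hε1 hP hP0 hPε hn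
  refine ⟨⊤, ?_, Z, hZ, hZP, hreg, hcard⟩
  have hedges : (Fintype.card V : ℝ) ^ 2 ≤ (1 + δ) * ∑ ω, adjInd G ω := calc
    (Fintype.card V : ℝ) ^ 2 ≤ p * (1 + δ) * (Fintype.card V : ℝ) ^ 2 :=
      le_mul_of_one_le_left (sq_nonneg _) hpδ
    _ ≤ graphDensity G * (1 + δ) * (Fintype.card V : ℝ) ^ 2 := by gcongr
    _ = (1 + δ) * ∑ ω, adjInd G ω := by rw [sum_adjInd_eq_graphDensity_mul_sq]; ring
  have hdist := two_mul_ncard_symmDiff_top_le G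
  rw [sum_adjInd] at hedges hdist
  linarith

lemma mul_sqrt_le_sq_div_pow {n y : ℝ} (hy : 0 < y) (hn : y ^ 32 ≤ n) :
    n * √n ≤ n ^ 2 / y ^ 16 := by
  have hn0 : 0 ≤ n := (by positivity : 0 ≤ y ^ 32).trans hn
  rw [le_div_iff₀ (by positivity)]
  calc n * √n * y ^ 16 ≤ n * √n * √n := by
        gcongr
        exact Real.le_sqrt_of_sq_le (by rwa [← pow_mul])
    _ = n ^ 2 := by rw [mul_assoc, Real.mul_self_sqrt hn0, sq]

lemma div_pow_add_mul_sqrt_add_le {n y : ℝ} (hy : 360 ≤ y) (hn : y ^ 32 ≤ n) :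
    n ^ 2 / y ^ 10 + (3 * n * √n + n) ≤ n ^ 2 / (72 * y ^ 9) := by
  have hy1 : 1 ≤ y := by linarith
  have hn1 : 1 ≤ n := (one_le_pow₀ hy1).trans hn
  have hsqrt : n * √n ≤ n ^ 2 / y ^ 10 := calc
    n * √n ≤ n ^ 2 / y ^ 16 := mul_sqrt_le_sq_div_pow (by linarith) hn
    _ ≤ n ^ 2 / y ^ 10 := by gcongr; norm_num
  have hle : n ≤ n * √n := le_mul_of_one_le_right (by linarith) (Real.one_le_sqrt.2 hn1)
  calc n ^ 2 / y ^ 10 + (3 * n * √n + n) ≤ 5 * (n ^ 2 / y ^ 10) := by linarith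
    _ = 5 * n ^ 2 / (y * y ^ 9) := by ring
    _ ≤ 5 * n ^ 2 / (360 * y ^ 9) := by gcongr
    _ = n ^ 2 / (72 * y ^ 9) := by ring

theorem exists_graph_near_isRegularPartition {κ : Type*} [Fintype κ] {f : V → κ} {W : V × V → ℝ}
    {y : ℝ} (hε : 0 < ε) (hε1 : ε ≤ 1) (hP : P.IsEquipartition) (hP0 : 0 < #P.parts)
    (hPε : #P.parts ≤ 1 / ε) (hεy : 1 / ε ≤ y) (hy : 360 ≤ y) (hκ : Fintype.card κ ≤ y)
    (hn : y ^ 32 ≤ Fintype.card V) (hW : IsEdgeWeight W)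
    (hcut : cutNorm (W - cellAvg (Prod.map f f) (adjInd G)) ≤
      1 / y ^ 10 * Fintype.card (V × V)) :
    ∃ G' : SimpleGraph V,
      ∑ ω, |adjInd G' ω - adjInd G ω| ≤
        ∑ ω, |W ω - adjInd G ω| + 3 * Fintype.card V * √(Fintype.card V) ∧
      ∃ Z ≤ P, Z.IsEquipartition ∧ IsRegularPartition G' ε Z ∧ #Z.parts ≤ 3 * y ^ 3 := by
  have hn0 : (0 : ℝ) < Fintype.card V := lt_of_lt_of_le (by positivity) hn
  have : Nonempty V := Fintype.card_pos_iff.1 (mod_cast hn0)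
  obtain ⟨G', hG', hcut'⟩ := exists_graph_near hW G
  refine ⟨G', hG', exists_isRegularPartition_card_parts_le hε hε1 hP hP0 (hPε.trans hεy) hεy hκ
    ?_ (cellAvg_factorsThrough (Prod.map f f) (adjInd G)) ?_⟩
  · exact (three_mul_cube_le_pow (by linarith)).trans hn
  · rw [Fintype.card_prod, Nat.cast_mul, ← sq, one_div_mul_eq_div] at hcut
    calc cutNorm (adjInd G' - cellAvg (Prod.map f f) (adjInd G))
        = cutNorm (W - cellAvg (Prod.map f f) (adjInd G) + (adjInd G' - W)) := by
          rw [sub_add_sub_cancel']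
      _ ≤ (Fintype.card V : ℝ) ^ 2 / y ^ 10 +
            (3 * Fintype.card V * √(Fintype.card V) + Fintype.card V) :=
          (cutNorm_add_le _ _).trans (add_le_add hcut hcut')
      _ ≤ (Fintype.card V : ℝ) ^ 2 / (72 * y ^ 9) := div_pow_add_mul_sqrt_add_le hy hn

end Approximation

/-! ### The number of steps and the height of the tower -/

section Height

variable {δ p x : ℝ}

lemma half_le_log_one_div (hδ : 0 < δ) (hδ1 : δ ≤ 1) (hp : 0 < p) (hpδ : p * (1 + δ) ≤ 1) :
    δ / 2 ≤ Real.log (1 / p) := calc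
  δ / 2 ≤ δ / (1 + δ) := by gcongr; linarith
  _ = 1 - (1 + δ)⁻¹ := by field_simp; ring
  _ ≤ Real.log (1 + δ) := Real.one_sub_inv_le_log_of_pos (by linarith)
  _ ≤ Real.log (1 / p) := by
    gcongr
    rwa [le_div_iff₀' hp]

lemma one_div_le_two_mul_log_div_sq (hδ : 0 < δ) (hδ1 : δ ≤ 1) (hp : 0 < p)
    (hpδ : p * (1 + δ) ≤ 1) : 1 / δ ≤ 2 * (Real.log (1 / p) / δ ^ 2) := calc
  1 / δ = 2 * (δ / 2 / δ ^ 2) := by field_simp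
  _ ≤ 2 * (Real.log (1 / p) / δ ^ 2) := by
    gcongr
    exact half_le_log_one_div hδ hδ1 hp hpδ

lemma one_div_le_two_rpow_of_mul_le_one (hδ : 0 < δ) (hδ1 : δ ≤ 1) (hp : 0 < p)
    (hpδ : p * (1 + δ) ≤ 1) :
    1 / δ ≤ (2 : ℝ) ^ (2 * (Real.log (1 / p) / δ ^ 2)) := by
  have hle := one_div_le_two_mul_log_div_sq hδ hδ1 hp hpδ
  linarith [one_add_le_two_rpow ((one_le_one_div hδ hδ1).trans hle)]

lemma one_div_le_two_rpow_of_le_one (hδ : 0 < δ) (hδ1 : δ ≤ 1) (hp : 0 < p) (hp1 : p ≤ 1) :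
    1 / p ≤ (2 : ℝ) ^ (2 * (Real.log (1 / p) / δ ^ 2)) := by
  have hlog0 : 0 ≤ Real.log (1 / p) := Real.log_nonneg (one_le_one_div hp hp1)
  have hlog : Real.log (1 / p) ≤ Real.log (1 / p) / δ ^ 2 :=
    le_div_self hlog0 (by positivity) (pow_le_one₀ hδ.le hδ1)
  rw [← Real.log_le_log_iff (by positivity) (by positivity), Real.log_rpow two_pos]
  nlinarith [Real.log_two_gt_d9]

lemma exists_natCast_gt_and_le {L : ℝ} {H : ℕ} (hL : 1 ≤ 2 * L) (hH : 50 * L ≤ H) :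
    ∃ T : ℕ, 16 * L < T ∧ 5 + 2 * T ≤ H := by
  refine ⟨⌊16 * L⌋₊ + 1, mod_cast Nat.lt_floor_add_one _, ?_⟩
  have : (5 + 2 * (⌊16 * L⌋₊ + 1) : ℝ) ≤ H := by
    linarith [Nat.floor_le (show 0 ≤ 16 * L by linarith)]
  exact_mod_cast this

end Height

section Main

variable {V : Type*} [Fintype V] {G : SimpleGraph V} {ε δ p x y : ℝ}

lemma exists_edgeWeight_near_adjInd [Nonempty V] (hx : 1 ≤ x) (hδ : 0 < δ) (hp : 0 < p)
    (hG : p ≤ graphDensity G) {T : ℕ} (hT : 16 * (Real.log (1 / p) / δ ^ 2) < T) :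
    ∃ i < T, ∃ (ι : Type) (_ : Fintype ι) (f : V → ι) (W : V × V → ℝ),
      Fintype.card ι ≤ twrAt x (4 + 2 * i) ∧ IsEdgeWeight W ∧
      ∑ ω, |W ω - adjInd G ω| ≤ δ / 2 * ∑ ω, adjInd G ω ∧
      cutNorm (W - cellAvg (Prod.map f f) (adjInd G)) ≤
        1 / twrAt x (4 + 2 * i) ^ 10 * Fintype.card (V × V) := by
  set M := ∑ ω, adjInd G ω with hM
  have hpM : p * Fintype.card (V × V) ≤ M := by
    rw [hM, sum_adjInd_eq_graphDensity_mul_sq, Fintype.card_prod, Nat.cast_mul, ← sq]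
    gcongr
  have hM0 : 0 < M := lt_of_lt_of_le (by positivity) hpM
  have hy (i : ℕ) : 65536 ≤ twrAt x (4 + 2 * i) :=
    le_twrAt_of_four_le hx (Nat.le_add_right _ _)
  have hentropy : cellEntropy (Prod.map (Function.const V ()) (Function.const V ())) (adjInd G) <
      T * (M * δ ^ 2 / 16) := calc
    _ ≤ M * Real.log (1 / p) := cellEntropy_le_of_subsingleton hp hpM
    _ = 16 * (Real.log (1 / p) / δ ^ 2) * (M * δ ^ 2 / 16) := by field_simp
    _ < T * (M * δ ^ 2 / 16) := by gcongr
  obtain ⟨i, hi, ι, _, f, W, hι, hW, hdist, hcut⟩ := exists_edgeWeight_near_of_cellEntropy_lt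
    (isEdgeWeight_adjInd G) (y := fun i => twrAt x (4 + 2 * i))
    (η := fun i => 1 / twrAt x (4 + 2 * i) ^ 10) (by linarith [hy 0])
    (fun i => by have := hy i; positivity) (fun i => mul_four_pow_ceil_le (by linarith [hy i]))
    hentropy
  refine ⟨i, hi, ι, inferInstance, f, W, hι, hW, ?_, hcut⟩
  refine (abs_le_of_sq_le_sq' (hdist.trans_eq ?_) (by positivity)).2
  ring

lemma three_mul_mul_sqrt_card_le [Nonempty V] (hδ : 0 < δ) (hp : 0 < p) (hG : p ≤ graphDensity G)
    (hδy : 1 / δ ≤ y) (hpy : 1 / p ≤ y) (hy : 6 ≤ y) (hn : y ^ 32 ≤ Fintype.card V) :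
    3 * Fintype.card V * √(Fintype.card V) ≤ δ / 2 * ∑ ω, adjInd G ω := by
  set n := (Fintype.card V : ℝ)
  have hδpy : 6 ≤ δ * p * y ^ 16 := calc
    6 ≤ y ^ 14 := hy.trans (le_self_pow₀ (by linarith) (by norm_num))
    _ = 1 * 1 * y ^ 14 := by ring
    _ ≤ δ * y * (p * y) * y ^ 14 := by
      gcongr
      exacts [(div_le_iff₀' hδ).1 hδy, (div_le_iff₀' hp).1 hpy]
    _ = δ * p * y ^ 16 := by ring
  calc 3 * n * √n = 3 * (n * √n) := by ring
    _ ≤ 3 * (n ^ 2 / y ^ 16) := by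
      gcongr
      exact mul_sqrt_le_sq_div_pow (by linarith) hn
    _ = 6 * (n ^ 2 / y ^ 16) / 2 := by ring
    _ ≤ δ * p * y ^ 16 * (n ^ 2 / y ^ 16) / 2 := by gcongr
    _ = δ / 2 * (p * n ^ 2) := by field_simp
    _ ≤ δ / 2 * ∑ ω, adjInd G ω := by
      rw [sum_adjInd_eq_graphDensity_mul_sq]
      gcongr

variable [DecidableEq V] {P : Finpartition (univ : Finset V)}

theorem hasRegularApproximation_of_mul_le_one [Nonempty V] (hε : 0 < ε) (hε1 : ε ≤ 1) (hδ : 0 < δ)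
    (hδ1 : δ ≤ 1) (hp : 0 < p) (hpδ : p * (1 + δ) ≤ 1) (hG : p ≤ graphDensity G)
    (hP : P.IsEquipartition) (hP0 : 0 < #P.parts) (hPε : #P.parts ≤ 1 / ε) {H : ℕ}
    (hH : 50 * (Real.log (1 / p) / δ ^ 2) ≤ H) (hn : twrAt (1 / ε) H ≤ Fintype.card V) :
    HasRegularApproximation G ε δ P (twrAt (1 / ε) H) := by
  have hx : 1 ≤ 1 / ε := one_le_one_div hε hε1
  have hp1 : p ≤ 1 := by nlinarith
  have hL := (one_le_one_div hδ hδ1).trans (one_div_le_two_mul_log_div_sq hδ hδ1 hp hpδ)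
  have hδL := one_div_le_two_rpow_of_mul_le_one hδ hδ1 hp hpδ
  have hpL := one_div_le_two_rpow_of_le_one hδ hδ1 hp hp1
  set L := Real.log (1 / p) / δ ^ 2
  obtain ⟨T, hLT, hTH⟩ := exists_natCast_gt_and_le hL hH
  obtain ⟨i, hi, ι, _, f, W, hι, hW, hdist, hcut⟩ := exists_edgeWeight_near_adjInd hx hδ hp hG hLT
  have hy : 65536 ≤ twrAt (1 / ε) (4 + 2 * i) := le_twrAt_of_four_le hx (Nat.le_add_right _ _)
  have hyH : twrAt (1 / ε) (4 + 2 * i) ^ 32 ≤ twrAt (1 / ε) H :=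
    twrAt_pow_thirtyTwo_le hx (Nat.le_add_right _ _) (by omega)
  obtain ⟨G', hG', Z, hZP, hZ, hreg, hcard⟩ := exists_graph_near_isRegularPartition hε hε1 hP hP0
    hPε (twrAt_mono hx (Nat.zero_le _)) (by linarith) hι (hyH.trans hn) hW hcut
  refine ⟨G', ?_, Z, hZ, hZP, hreg, hcard.trans ((three_mul_cube_le_pow (by linarith)).trans hyH)⟩
  have hLT' : (2 : ℝ) ^ (2 * L) ≤ twrAt (1 / ε) (3 + 2 * T + 1) :=
    two_rpow_le_twrAt_succ hx (by push_cast; linarith)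
  have hround : 3 * Fintype.card V * √(Fintype.card V) ≤ δ / 2 * ∑ ω, adjInd G ω :=
    three_mul_mul_sqrt_card_le hδ hp hG (hδL.trans hLT') (hpL.trans hLT')
      (by linarith [le_twrAt_of_four_le hx (by omega : 4 ≤ 3 + 2 * T + 1)])
      ((twrAt_pow_thirtyTwo_le hx (by omega) (by omega)).trans hn)
  rw [← two_mul_ncard_symmDiff_edgeSet] at hG'
  rw [sum_adjInd] at hdist hround
  linarith

end Main

/-- **Upper bound for the sparse regular approximation lemma (SRAL).**
There is an absolute constant `c > 0` such that for all `ε, δ, p ∈ (0,1]`: if `G` has density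
at least `p` and `P₀` is an equipartition of `V(G)` of order at most `1/ε`, then one can
add/remove at most `δ|E(G)|` edges of `G` so that the resulting graph `G'` has an `ε`-regular
equipartition refining `P₀` of order at most `twr_{1/ε}(c·log(1/p)/δ²)`. -/
theorem sral_upper_bound :
    ∃ c : ℝ, 0 < c ∧
      ∀ ε δ p : ℝ, ε ∈ Set.Ioc (0 : ℝ) 1 → δ ∈ Set.Ioc (0 : ℝ) 1 → p ∈ Set.Ioc (0 : ℝ) 1 →
      ∀ (V : Type) (_ : Fintype V) (_ : DecidableEq V) (G : SimpleGraph V),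
        p ≤ graphDensity G →
        ∀ P₀ : Finpartition (univ : Finset V), P₀.IsEquipartition →
          (P₀.parts.card : ℝ) ≤ 1 / ε →
        ∃ G' : SimpleGraph V,
          ((symmDiff G.edgeSet G'.edgeSet).ncard : ℝ) ≤ δ * G.edgeSet.ncard ∧
          ∃ Z : Finpartition (univ : Finset V), Z.IsEquipartition ∧ Z ≤ P₀ ∧
            IsRegularPartition G' ε Z ∧
            (Z.parts.card : ℝ) ≤ twrAt (1 / ε) ⌈c * Real.log (1 / p) / δ ^ 2⌉₊ := by
  refine ⟨50, by norm_num, ?_⟩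
  rintro ε δ p ⟨hε, hε1⟩ ⟨hδ, hδ1⟩ ⟨hp, -⟩ V _ _ G hG P₀ hP hPε
  set H := ⌈50 * Real.log (1 / p) / δ ^ 2⌉₊
  rcases le_total (Fintype.card V : ℝ) (twrAt (1 / ε) H) with hn | hn
  · exact hasRegularApproximation_of_card_le hε hδ.le hn
  have hx : 1 ≤ 1 / ε := one_le_one_div hε hε1
  have : Nonempty V := Fintype.card_pos_iff.1 <| by
    exact_mod_cast (zero_lt_one.trans_le (one_le_twrAt hx H)).trans_le hn
  have hP0 : 0 < #P₀.parts := card_pos.2 (P₀.parts_nonempty univ_nonempty.ne_empty)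
  have hH : 50 * (Real.log (1 / p) / δ ^ 2) ≤ H := by
    rw [← mul_div_assoc]
    exact Nat.le_ceil _
  rcases le_total (p * (1 + δ)) 1 with hpδ | hpδ
  · exact hasRegularApproximation_of_mul_le_one hε hε1 hδ hδ1 hp hpδ hG hP hP0 hPε hH hn
  · have hlog : 0 < Real.log (1 / p) :=
      Real.log_pos (one_lt_one_div hp (hG.trans_lt (graphDensity_lt_one G)))
    have hH1 : 1 ≤ H := Nat.one_le_ceil_iff.2 (by positivity)
    have htwr : (2 : ℝ) ^ (1 / ε) ≤ twrAt (1 / ε) H := twrAt_mono hx hH1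
    exact (hasRegularApproximation_of_one_le_mul hε hε1 hδ.le hG hpδ hP hP0 hPε
      (htwr.trans hn)).mono htwr
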